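/- arXiv:1904.03592 — 3 statements merged into one kernel-verified Lean document; each statement's English description precedes it below -/
import Mathlib

section
/- Let G ∈ M_t(ℝ[x]) be a matrix polynomial of degree d whose leading coefficient G_d is positive definite. If G(x) is positive definite for all x ∈ [0, +∞), then there exist a positive integer N and positive definite matrices H_i ∈ M_t(ℝ), i = 0, …, N+d, such that (1+x)^N G(x) = Σ_{i=0}^{N+d} H_i x^i. -/
/-- The `i`-th coefficient matrix of a univariate matrix polynomial. -/
noncomputable def coeffMatrix {t : ℕ} (G : Matrix (Fin t) (Fin t) (Polynomial ℝ)) (i : ℕ) :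
    Matrix (Fin t) (Fin t) ℝ :=
  Matrix.of fun a b => (G a b).coeff i

/-!
Pólya's argument. Up to a positive factor, the `a`-th coefficient of `(1 + x) ^ N * ∑ k ≤ d, gₖ xᵏ`
is `∑ k ≤ d, u (u - e) ⋯ (u - (k - 1) e) * v (v - e) ⋯ (v - (d - k - 1) e) * gₖ`, where
`e = 1 / (N + d)`, `u = a * e` and `v = 1 - u`. As `e → 0` this tends, uniformly in `u ∈ [0, 1]`,
to the homogenization `∑ k ≤ d, uᵏ (1 - u) ^ (d - k) gₖ`, which lies in a given open cone for every
`u ∈ [0, 1]` as soon as the leading coefficient and the values on `[0, ∞)` do. For matrices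
the cone consists of all `A` with `re (v* A v) > 0` for `v ≠ 0`, and the coefficients are Hermitian
because infinitely many values are.
-/

section Polya

open Filter Finset Polynomial Topology
open scoped Nat

/-- The falling power `u (u - e) ⋯ (u - (k - 1) e)` with step `e`, which deforms the monomial
`u ^ k` (the case `e = 0`) into a falling factorial (the case `e = 1`). -/
def fallingPow {R : Type*} [CommRing R] (e u : R) (k : ℕ) : R :=
  ∏ j ∈ range k, (u - j * e)

theorem fallingPow_zero_step {R : Type*} [CommRing R] (u : R) (k : ℕ) :
    fallingPow 0 u k = u ^ k := by
  simp [fallingPow]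

theorem continuous_fallingPow {R : Type*} [CommRing R] [TopologicalSpace R] [IsTopologicalRing R]
    (k : ℕ) : Continuous fun z : R × R => fallingPow z.1 z.2 k := by
  unfold fallingPow
  fun_prop

theorem pow_mul_fallingPow_div {K : Type*} [Field K] {m : K} (hm : m ≠ 0) (a k : ℕ) :
    m ^ k * fallingPow (1 / m) (a / m) k = a.descFactorial k := by
  rw [← descPochhammer_eval_eq_descFactorial K, descPochhammer_eval_eq_prod_range, fallingPow,
    pow_eq_prod_const, ← prod_mul_distrib]
  refine prod_congr rfl fun j _ => ?_
  rw [mul_one_div, ← sub_div, mul_div_cancel₀ _ hm]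

theorem factorial_mul_coeff_one_add_X_pow_mul_X_pow (R : Type*) [CommSemiring R] {a b N d k : ℕ}
    (hab : a + b = N + d) (hk : k ≤ d) :
    (a ! * b ! : R) * ((1 + X) ^ N * X ^ k : R[X]).coeff a =
      N ! * (a.descFactorial k * b.descFactorial (d - k)) := by
  rw [coeff_mul_X_pow']
  split_ifs with hka
  · obtain ⟨j, rfl⟩ := Nat.exists_eq_add_of_le' hka
    rw [Nat.add_sub_cancel, coeff_one_add_X_pow]
    rcases le_or_gt j N with hj | hj
    · obtain ⟨l, rfl⟩ := Nat.exists_eq_add_of_le hj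
      obtain rfl : b = l + (d - k) := by lia
      have ha := Nat.factorial_mul_descFactorial (Nat.le_add_left k j)
      have hb := Nat.factorial_mul_descFactorial (Nat.le_add_left (d - k) l)
      have hN := Nat.add_choose_mul_factorial_mul_factorial j l
      rw [Nat.add_sub_cancel] at ha hb
      rw [← ha, ← hb, ← hN, Nat.choose_symm_add]
      push_cast
      ring
    · rw [Nat.choose_eq_zero_of_lt hj, Nat.descFactorial_of_lt (n := b) (by lia)]
      simp
  · rw [Nat.descFactorial_of_lt (n := a) (by lia)]
    simp

/-- The deformation with step `e` of the homogenization `∑ k ≤ d, uᵏ (1 - u) ^ (d - k) gₖ` of a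
polynomial `∑ k ≤ d, gₖ xᵏ` with coefficients in a module, powers being replaced by falling powers.
The homogeneous coordinates are normalized to `(u, 1 - u)`. -/
def fallingHomogenization {R E : Type*} [CommRing R] [AddCommMonoid E] [Module R E] (g : ℕ → E)
    (d : ℕ) (e u : R) : E :=
  ∑ k ∈ range (d + 1), (fallingPow e u k * fallingPow e (1 - u) (d - k)) • g k

theorem continuous_fallingHomogenization {R E : Type*} [CommRing R] [TopologicalSpace R]
    [IsTopologicalRing R] [AddCommMonoid E] [Module R E] [TopologicalSpace E] [ContinuousAdd E]
    [ContinuousSMul R E] (g : ℕ → E) (d : ℕ) :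
    Continuous fun z : R × R => fallingHomogenization g d z.1 z.2 := by
  refine continuous_finsetSum _ fun k _ => Continuous.smul (.mul ?_ ?_) continuous_const
  · exact continuous_fallingPow k
  · exact (continuous_fallingPow (d - k)).comp
      (by fun_prop : Continuous fun z : R × R => (z.1, 1 - z.2))

theorem fallingHomogenization_zero_one (R : Type*) {E : Type*} [CommRing R] [AddCommMonoid E]
    [Module R E] (g : ℕ → E) (d : ℕ) : fallingHomogenization g d (0 : R) 1 = g d := by
  rw [fallingHomogenization, sum_range_succ, sum_eq_zero fun k hk => ?_]
  · simp [fallingPow_zero_step]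
  · have hkd : d - k ≠ 0 := (Nat.sub_pos_of_lt (mem_range.mp hk)).ne'
    simp [fallingPow_zero_step, hkd]

section Field

variable {K E : Type*} [Field K] [AddCommMonoid E] [Module K E]

theorem fallingHomogenization_zero_of_ne_one (g : ℕ → E) (d : ℕ) {u : K} (hu : u ≠ 1) :
    fallingHomogenization g d 0 u =
      (1 - u) ^ d • ∑ k ∈ range (d + 1), (u / (1 - u)) ^ k • g k := by
  have hu' : 1 - u ≠ 0 := sub_ne_zero.mpr hu.symm
  rw [fallingHomogenization, smul_sum]
  refine sum_congr rfl fun k hk => ?_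
  rw [smul_smul, fallingPow_zero_step, fallingPow_zero_step,
    ← pow_mul_pow_sub (1 - u) (mem_range_succ_iff.mp hk), mul_right_comm, ← mul_pow,
    mul_div_cancel₀ _ hu']

theorem sum_coeff_smul_eq_smul_fallingHomogenization [CharZero K] (g : ℕ → E) {a b N d : ℕ}
    (hab : a + b = N + d) (hN : N + d ≠ 0) :
    ∑ k ∈ range (d + 1), ((1 + X) ^ N * X ^ k : K[X]).coeff a • g k =
      (N ! * (N + d : K) ^ d / (a ! * b !)) •
        fallingHomogenization g d (1 / (N + d) : K) (a / (N + d)) := by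
  have hm : (N + d : K) ≠ 0 := by exact_mod_cast hN
  have hfac : (a ! * b ! : K) ≠ 0 := by
    exact_mod_cast mul_ne_zero a.factorial_ne_zero b.factorial_ne_zero
  have hb : 1 - a / (N + d : K) = b / (N + d) := by
    have hsub : (N + d : K) - a = b := sub_eq_of_eq_add' (by exact_mod_cast hab.symm)
    rw [one_sub_div hm, hsub]
  rw [fallingHomogenization, smul_sum]
  refine sum_congr rfl fun k hk => ?_
  have hkd : k ≤ d := mem_range_succ_iff.mp hk
  have hcoeff := factorial_mul_coeff_one_add_X_pow_mul_X_pow K hab hkd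
  rw [← pow_mul_fallingPow_div hm, ← pow_mul_fallingPow_div hm] at hcoeff
  rw [smul_smul, hb, ← pow_mul_pow_sub _ hkd, div_mul_eq_mul_div,
    eq_div_of_mul_eq hfac ((mul_comm _ _).trans hcoeff)]
  congr 1
  ring

end Field

section Cone

variable {E : Type*} [AddCommMonoid E] [Module ℝ E]
variable {C : Set E} {g : ℕ → E} {d : ℕ}

theorem fallingHomogenization_zero_mem
    (hsmul : ∀ c : ℝ, 0 < c → ∀ x ∈ C, c • x ∈ C) (hlead : g d ∈ C)
    (hpos : ∀ x : ℝ, 0 ≤ x → ∑ k ∈ range (d + 1), x ^ k • g k ∈ C)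
    {u : ℝ} (hu : u ∈ Set.Icc 0 1) : fallingHomogenization g d 0 u ∈ C := by
  rcases hu.2.eq_or_lt with rfl | hu1
  · rwa [fallingHomogenization_zero_one]
  · have h1u : 0 < 1 - u := sub_pos.mpr hu1
    rw [fallingHomogenization_zero_of_ne_one g d hu1.ne]
    exact hsmul _ (pow_pos h1u d) _ (hpos _ (div_nonneg hu.1 h1u.le))

theorem eventually_sum_coeff_one_add_X_pow_smul_mem_cone [TopologicalSpace E] [ContinuousAdd E]
    [ContinuousSMul ℝ E] (hC : IsOpen C)
    (hsmul : ∀ c : ℝ, 0 < c → ∀ x ∈ C, c • x ∈ C) (hlead : g d ∈ C)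
    (hpos : ∀ x : ℝ, 0 ≤ x → ∑ k ∈ range (d + 1), x ^ k • g k ∈ C) :
    ∀ᶠ N : ℕ in atTop, ∀ i ≤ N + d,
      ∑ k ∈ range (d + 1), ((1 + X) ^ N * X ^ k : ℝ[X]).coeff i • g k ∈ C := by
  have hnhds : ∀ᶠ e in 𝓝 (0 : ℝ), ∀ u ∈ Set.Icc (0 : ℝ) 1, fallingHomogenization g d e u ∈ C :=
    isCompact_Icc.eventually_forall_of_forall_eventually fun u hu =>
      (continuous_fallingHomogenization g d).continuousAt.eventually_mem <|
        hC.mem_nhds (fallingHomogenization_zero_mem hsmul hlead hpos hu)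
  have hstep : Tendsto (fun N : ℕ => 1 / (N + d : ℝ)) atTop (𝓝 0) := by
    simpa using (tendsto_add_atTop_iff_nat d).mpr (tendsto_one_div_atTop_nhds_zero_nat (𝕜 := ℝ))
  filter_upwards [hstep.eventually hnhds, eventually_gt_atTop 0] with N hN hN0 i hi
  obtain ⟨b, hb⟩ := Nat.exists_eq_add_of_le hi
  rw [sum_coeff_smul_eq_smul_fallingHomogenization g hb.symm (by lia)]
  refine hsmul _ (by positivity) _ (hN _ ⟨by positivity, div_le_one_of_le₀ ?_ (by positivity)⟩)
  exact_mod_cast hi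

end Cone

end Polya

section StrictlyAccretive

open Matrix
open scoped ComplexOrder

variable (n 𝕜 : Type*) [Fintype n] [RCLike 𝕜]

/-- The cone of strictly accretive matrices, those whose Hermitian part is positive definite. No
symmetry is imposed, so that the cone is open in the space of all matrices. -/
def strictlyAccretive : Set (Matrix n n 𝕜) :=
  {A | ∀ v : n → 𝕜, v ≠ 0 → 0 < RCLike.re (star v ⬝ᵥ A *ᵥ v)}

variable {n 𝕜}

theorem posDef_iff_isHermitian_and_mem_strictlyAccretive {A : Matrix n n 𝕜} :
    A.PosDef ↔ A.IsHermitian ∧ A ∈ strictlyAccretive n 𝕜 := by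
  rw [posDef_iff_dotProduct_mulVec]
  refine and_congr_right fun hA => forall₂_congr fun v _ => ?_
  rw [RCLike.pos_iff, and_iff_left (hA.im_star_dotProduct_mulVec_self v)]

theorem smul_mem_strictlyAccretive {c : ℝ} (hc : 0 < c) {A : Matrix n n 𝕜}
    (hA : A ∈ strictlyAccretive n 𝕜) : c • A ∈ strictlyAccretive n 𝕜 := fun v hv => by
  rw [smul_mulVec, dotProduct_smul, RCLike.smul_re]
  exact mul_pos hc (hA v hv)

theorem mem_strictlyAccretive_iff_forall_mem_sphere {A : Matrix n n 𝕜} :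
    A ∈ strictlyAccretive n 𝕜 ↔
      ∀ v ∈ Metric.sphere (0 : n → 𝕜) 1, 0 < RCLike.re (star v ⬝ᵥ A *ᵥ v) := by
  refine ⟨fun hA v hv => hA v (ne_zero_of_mem_unit_sphere ⟨v, hv⟩), fun hA v hv => ?_⟩
  have hnorm : 0 < ‖v‖ := norm_pos_iff.mpr hv
  have hunit := hA (‖v‖⁻¹ • v) (by simp [norm_smul, hnorm.ne'])
  rw [star_smul, mulVec_smul, dotProduct_smul, smul_dotProduct, star_trivial, RCLike.smul_re,
    RCLike.smul_re] at hunit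
  exact pos_of_mul_pos_right (pos_of_mul_pos_right hunit (by positivity)) (by positivity)

theorem isOpen_strictlyAccretive : IsOpen (strictlyAccretive n 𝕜) := by
  refine isOpen_iff_eventually.mpr fun A hA => ?_
  simp_rw [mem_strictlyAccretive_iff_forall_mem_sphere] at hA ⊢
  refine (isCompact_sphere _ _).eventually_forall_of_forall_eventually fun v hv => ?_
  have hcont : Continuous fun z : Matrix n n 𝕜 × (n → 𝕜) =>
      RCLike.re (star z.2 ⬝ᵥ z.1 *ᵥ z.2) := by
    fun_prop
  exact hcont.continuousAt.eventually (lt_mem_nhds (hA v hv))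

end StrictlyAccretive

section MatrixPolynomial

open Filter Finset Matrix Polynomial
open scoped ComplexOrder

variable {m n : Type*} {d : ℕ}

theorem matrix_eq_sum_X_pow_smul_map_C {R : Type*} [Semiring R] {G : Matrix m n R[X]}
    (hdeg : ∀ a b, (G a b).natDegree ≤ d) :
    G = ∑ i ∈ range (d + 1), (X ^ i : R[X]) • (G.map (coeff · i)).map C := by
  ext1 a b
  rw [Matrix.sum_apply]
  conv_lhs => rw [(G a b).as_sum_range_C_mul_X_pow' (Nat.lt_succ_of_le (hdeg a b))]
  simp only [Matrix.smul_apply, map_apply, smul_eq_mul, X_pow_mul_C]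

theorem natDegree_one_add_X_pow_smul_apply_le {R : Type*} [Semiring R] {G : Matrix m n R[X]}
    (hdeg : ∀ a b, (G a b).natDegree ≤ d) (N : ℕ) (a : m) (b : n) :
    ((((1 + X) ^ N : R[X]) • G) a b).natDegree ≤ N + d := by
  have hlin : (1 + X : R[X]).natDegree ≤ 1 := by compute_degree
  have hpow : ((1 + X : R[X]) ^ N).natDegree ≤ N := by
    simpa using natDegree_pow_le_of_le N hlin
  exact natDegree_mul_le_of_le hpow (hdeg a b)

theorem map_coeff_map_smul {R A : Type*} [CommSemiring R] [CommSemiring A] [Algebra R A]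
    {G : Matrix m n A[X]} (hdeg : ∀ a b, (G a b).natDegree ≤ d) (p : R[X]) (i : ℕ) :
    (p.map (algebraMap R A) • G).map (coeff · i) =
      ∑ k ∈ range (d + 1), (p * X ^ k).coeff i • G.map (coeff · k) := by
  ext a b
  rw [Matrix.sum_apply, map_apply, Matrix.smul_apply, smul_eq_mul]
  conv_lhs => rw [(G a b).as_sum_range_C_mul_X_pow' (Nat.lt_succ_of_le (hdeg a b))]
  rw [mul_sum, finsetSum_coeff]
  refine sum_congr rfl fun k _ => ?_
  rw [mul_left_comm, coeff_C_mul, Matrix.smul_apply, map_apply, Algebra.smul_def, mul_comm,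
    ← coeff_map, Polynomial.map_mul, Polynomial.map_pow, map_X]

theorem map_eval_algebraMap_eq_sum {R A : Type*} [CommSemiring R] [Semiring A] [Algebra R A]
    {G : Matrix m n A[X]} (hdeg : ∀ a b, (G a b).natDegree ≤ d) (x : R) :
    G.map (eval (algebraMap R A x)) = ∑ k ∈ range (d + 1), x ^ k • G.map (coeff · k) := by
  ext a b
  rw [Matrix.sum_apply, map_apply, eval_eq_sum_range' (Nat.lt_succ_of_le (hdeg a b))]
  refine sum_congr rfl fun k _ => ?_
  rw [Matrix.smul_apply, map_apply, Algebra.smul_def, ← map_pow, Algebra.commutes]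

theorem isHermitian_map_coeff_of_infinite {R : Type*} [CommRing R] [IsDomain R] [StarRing R]
    {G : Matrix n n R[X]} {S : Set R} (hS : S.Infinite) (hself : ∀ x ∈ S, IsSelfAdjoint x)
    (hG : ∀ x ∈ S, (G.map (eval x)).IsHermitian) (k : ℕ) :
    (G.map (coeff · k)).IsHermitian := by
  refine IsHermitian.ext fun a b => ?_
  have hconj : (G b a).map (starRingEnd R) = G a b := by
    refine eq_of_infinite_eval_eq _ _ (hS.mono fun x hx => ?_)
    calc ((G b a).map (starRingEnd R)).eval x
        = ((G b a).map (starRingEnd R)).eval (starRingEnd R x) := by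
          rw [starRingEnd_apply, (hself x hx).star_eq]
      _ = star ((G b a).eval x) := by rw [eval_map_apply, starRingEnd_apply]
      _ = (G a b).eval x := (hG x hx).apply a b
  simp only [map_apply, ← hconj, coeff_map, starRingEnd_apply]

variable {𝕜 : Type*} [RCLike 𝕜] [Finite n] {G : Matrix n n 𝕜[X]}

theorem eventually_posDef_map_coeff_one_add_X_pow_smul
    (hdeg : ∀ a b, (G a b).natDegree ≤ d) (hlead : (G.map (coeff · d)).PosDef)
    (hpos : ∀ x : ℝ, 0 ≤ x → (G.map (eval (x : 𝕜))).PosDef) :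
    ∀ᶠ N : ℕ in atTop, ∀ i ≤ N + d, ((((1 + X) ^ N : 𝕜[X]) • G).map (coeff · i)).PosDef := by
  have := Fintype.ofFinite n
  have hherm (k : ℕ) : (G.map (coeff · k)).IsHermitian :=
    isHermitian_map_coeff_of_infinite
      ((Set.Ici_infinite (0 : ℝ)).image (RCLike.ofReal_injective (K := 𝕜)).injOn)
      (Set.forall_mem_image.mpr fun x _ => RCLike.conj_ofReal x)
      (Set.forall_mem_image.mpr fun x hx => (hpos x hx).isHermitian) k
  have haccr (x : ℝ) (hx : 0 ≤ x) :
      ∑ k ∈ range (d + 1), x ^ k • G.map (coeff · k) ∈ strictlyAccretive n 𝕜 := by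
    rw [← map_eval_algebraMap_eq_sum hdeg, RCLike.algebraMap_eq_ofReal]
    exact (posDef_iff_isHermitian_and_mem_strictlyAccretive.mp (hpos x hx)).2
  have hmem := eventually_sum_coeff_one_add_X_pow_smul_mem_cone
    (g := fun k => G.map (coeff · k)) isOpen_strictlyAccretive
    (fun _ hc _ => smul_mem_strictlyAccretive hc)
    (posDef_iff_isHermitian_and_mem_strictlyAccretive.mp hlead).2 haccr
  filter_upwards [hmem] with N hN i hi
  have hsum := map_coeff_map_smul (R := ℝ) hdeg ((1 + X) ^ N) i
  rw [Polynomial.map_pow, Polynomial.map_add, Polynomial.map_one, map_X] at hsum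
  rw [posDef_iff_isHermitian_and_mem_strictlyAccretive, hsum]
  exact ⟨isSelfAdjoint_sum _ fun k _ => (IsSelfAdjoint.all _).smul (hherm k).isSelfAdjoint, hN i hi⟩

theorem posDef_on_nonneg_rep_general
    (hdeg : ∀ a b, (G a b).natDegree ≤ d) (hlead : (G.map (coeff · d)).PosDef)
    (hpos : ∀ x : ℝ, 0 ≤ x → (G.map (eval (x : 𝕜))).PosDef) :
    ∀ᶠ N : ℕ in atTop, ∃ H : ℕ → Matrix n n 𝕜,
      (∀ i ∈ range (N + d + 1), (H i).PosDef) ∧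
      ((1 + X) ^ N : 𝕜[X]) • G = ∑ i ∈ range (N + d + 1), (X ^ i : 𝕜[X]) • (H i).map C := by
  filter_upwards [eventually_posDef_map_coeff_one_add_X_pow_smul hdeg hlead hpos] with N hN
  exact ⟨fun i => (((1 + X) ^ N : 𝕜[X]) • G).map (coeff · i),
    fun i hi => hN i (mem_range_succ_iff.mp hi),
    matrix_eq_sum_X_pow_smul_map_C (natDegree_one_add_X_pow_smul_apply_le hdeg N)⟩

end MatrixPolynomial

/-- if `G` has degree `d` with positive definite leading coefficient and
`G(x) ≻ 0` for all `x ∈ [0,∞)`, then for some `N ≥ 1`,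
`(1+x)^N G(x) = Σ_{i=0}^{N+d} Hᵢ xⁱ` with all `Hᵢ` positive definite. -/
theorem posDef_on_nonneg_rep (t d : ℕ)
    (G : Matrix (Fin t) (Fin t) (Polynomial ℝ))
    (hdegle : ∀ i j, (G i j).natDegree ≤ d)
    (hld : (coeffMatrix G d).PosDef)
    (hpos : ∀ x : ℝ, 0 ≤ x → (G.map (Polynomial.eval x)).PosDef) :
    ∃ N : ℕ, 0 < N ∧ ∃ H : ℕ → Matrix (Fin t) (Fin t) ℝ,
      (∀ i ∈ Finset.range (N + d + 1), (H i).PosDef) ∧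
      (((1 + Polynomial.X) ^ N : Polynomial ℝ)) • G =
        ∑ i ∈ Finset.range (N + d + 1),
          ((Polynomial.X ^ i : Polynomial ℝ)) • (H i).map Polynomial.C :=
  ((Filter.eventually_gt_atTop 0).and (posDef_on_nonneg_rep_general hdegle hld hpos)).exists
end

section
/- Let S = (S_i)_{i ∈ ℕ₀} be a sequence of symmetric matrices in M_t(ℝ). Then S is a matrix-valued [-1,1]-moment sequence if and only if Σ_{i=0}^{k} Σ_{j=0}^{l} (-1)^j C(k,i) C(l,j) tr(G S_{i+j}) ≥ 0 for all positive definite matrices G ∈ M_t(ℝ) and all k, l ∈ ℕ₀, where C(k,i) denotes the binomial coefficient. -/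
open MeasureTheory

/-- Integral of a real function against a finite signed measure (via Jordan decomposition). -/
noncomputable def sInt {α : Type*} [MeasurableSpace α] (s : SignedMeasure α) (f : α → ℝ) : ℝ :=
  (∫ x, f x ∂s.toJordanDecomposition.posPart) - ∫ x, f x ∂s.toJordanDecomposition.negPart

/-- A matrix-valued measure (a `t × t` matrix of finite signed Borel measures on `ℝ`)
is positive semidefinite if its value on every Borel set is a positive semidefinite matrix. -/
def IsPSDMatMeas {t : ℕ} (E : Fin t → Fin t → SignedMeasure ℝ) : Prop :=
  ∀ A : Set ℝ, MeasurableSet A → (Matrix.of fun i j => E i j A).PosSemidef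

/-- The support of the matrix-valued measure `E` is contained in the closed set `K`:
each entry (as a signed measure) vanishes in total variation outside of `K`. -/
def SuppSubset {t : ℕ} (E : Fin t → Fin t → SignedMeasure ℝ) (K : Set ℝ) : Prop :=
  ∀ i j, (E i j).totalVariation Kᶜ = 0


/-- `S` is a matrix-valued `K`-moment sequence: there is a positive semidefinite matrix-valued
measure `E` supported in `K` with `Sᵢ = ∫ xⁱ dE(x)` entrywise. -/
def IsMatMomentSeq {t : ℕ} (S : ℕ → Matrix (Fin t) (Fin t) ℝ) (K : Set ℝ) : Prop :=
  ∃ E : Fin t → Fin t → SignedMeasure ℝ, IsPSDMatMeas E ∧ SuppSubset E K ∧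
    ∀ (k : ℕ) i j, S k i j = sInt (E i j) fun x => x ^ k

/-!
For scalar sequences this is Hausdorff's moment problem: the sequences `s` with `s 0 = 1` whose
Riesz functional is nonnegative on all products `(X - a) ^ k * (b - X) ^ l` form a compact convex
set whose extreme points are among the sequences `n ↦ x ^ n` with `x ∈ [a, b]`, so by Krein–Milman
each of them is the moment sequence of a probability measure on `[a, b]`.

For matrices, letting `G` tend to the boundary of the positive definite cone, the condition makes
`n ↦ tr (G * S n)` a moment sequence for every positive semidefinite `G`. Taking `G = v vᵀ` yields
measures `μ v` with moments `vᵀ S n v`, and polarization assembles from them a symmetric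
matrix-valued measure `E` with moments `S n`. Measures on a compact set are determined by their
moments, so `vᵀ E v = μ v ≥ 0`, and `E` is positive semidefinite.
-/

open Matrix Polynomial Topology

section MomentFunctional

variable {R : Type*}

/-- The Riesz functional of a sequence `s`: the linear functional on polynomials sending `X ^ n`
to `s n`. -/
noncomputable def momentFunctional [CommSemiring R] : (ℕ → R) →ₗ[R] R[X] →ₗ[R] R :=
  ((basisMonomials R).constr R).toLinearMap

section CommSemiring

variable [CommSemiring R]

theorem momentFunctional_X_pow (s : ℕ → R) (n : ℕ) : momentFunctional s (X ^ n) = s n := by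
  simpa [momentFunctional, X_pow_eq_monomial] using (basisMonomials R).constr_basis R s n

theorem momentFunctional_one (s : ℕ → R) : momentFunctional s 1 = s 0 := by
  simpa using momentFunctional_X_pow s 0

theorem momentFunctional_eq_sum (s : ℕ → R) (p : R[X]) :
    momentFunctional s p = p.sum fun n c => c * s n := by
  conv_lhs => rw [p.as_sum_support_C_mul_X_pow]
  simp only [map_sum, ← smul_eq_C_mul, map_smul, momentFunctional_X_pow, smul_eq_mul,
    Polynomial.sum]

theorem continuous_momentFunctional [TopologicalSpace R] [IsTopologicalSemiring R] (p : R[X]) :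
    Continuous fun s => momentFunctional s p := by
  simp only [momentFunctional_eq_sum, Polynomial.sum]
  fun_prop

/-- The localization `q • s` of the sequence `s` at a polynomial `q`, whose Riesz functional is
`p ↦ L (q * p)` when `L` is that of `s`. -/
noncomputable def localizedSeq (q : R[X]) (s : ℕ → R) : ℕ → R :=
  fun n => momentFunctional s (q * X ^ n)

theorem momentFunctional_localizedSeq (q : R[X]) (s : ℕ → R) (p : R[X]) :
    momentFunctional (localizedSeq q s) p = momentFunctional s (q * p) := by
  suffices momentFunctional (localizedSeq q s) = momentFunctional s ∘ₗ LinearMap.mulLeft R q from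
    LinearMap.congr_fun this p
  refine (basisMonomials R).ext fun n => ?_
  simp [← X_pow_eq_monomial, momentFunctional_X_pow, localizedSeq]

end CommSemiring

section CommRing

variable [CommRing R]

theorem localizedSeq_X_sub_C (a : R) (s : ℕ → R) :
    localizedSeq (X - C a) s = fun n => s (n + 1) - a * s n := by
  ext n
  rw [localizedSeq, sub_mul, ← pow_succ', ← smul_eq_C_mul, map_sub, map_smul,
    momentFunctional_X_pow, momentFunctional_X_pow, smul_eq_mul]

theorem localizedSeq_C_sub_X (b : R) (s : ℕ → R) :
    localizedSeq (C b - X) s = fun n => b * s n - s (n + 1) := by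
  ext n
  rw [localizedSeq, sub_mul, ← pow_succ', ← smul_eq_C_mul, map_sub, map_smul,
    momentFunctional_X_pow, momentFunctional_X_pow, smul_eq_mul]

end CommRing

theorem momentFunctional_moments {α : Type*} [MeasurableSpace α] {μ : Measure α} {f : α → ℝ}
    (hf : ∀ n : ℕ, Integrable (fun x => f x ^ n) μ) (p : ℝ[X]) :
    momentFunctional (fun n => ∫ x, f x ^ n ∂μ) p = ∫ x, p.eval (f x) ∂μ := by
  simp only [momentFunctional_eq_sum, eval_eq_sum, Polynomial.sum]
  rw [integral_finsetSum _ fun n _ => (hf n).const_mul _]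
  simp only [integral_const_mul]

end MomentFunctional

/-- Hausdorff's positivity condition on `[a, b]`: the Riesz functional of `s` is nonnegative on all
products `(X - a) ^ k * (b - X) ^ l`. -/
def IsHausdorffPositive (a b : ℝ) (s : ℕ → ℝ) : Prop :=
  ∀ k l : ℕ, 0 ≤ momentFunctional s ((X - C a) ^ k * (C b - X) ^ l)

theorem isHausdorffPositive_neg_one_one_iff {s : ℕ → ℝ} :
    IsHausdorffPositive (-1) 1 s ↔ ∀ k l : ℕ,
      0 ≤ ∑ i ∈ Finset.range (k + 1), ∑ j ∈ Finset.range (l + 1),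
        (-1 : ℝ) ^ j * (k.choose i : ℝ) * (l.choose j : ℝ) * s (i + j) := by
  refine forall₂_congr fun k l => ?_
  have expand : ((X - C (-1)) ^ k * (C 1 - X) ^ l : ℝ[X]) =
      ∑ i ∈ Finset.range (k + 1), ∑ j ∈ Finset.range (l + 1),
        ((-1 : ℝ) ^ j * (k.choose i : ℝ) * (l.choose j : ℝ)) • X ^ (i + j) := by
    rw [C_neg, C_1, sub_neg_eq_add, sub_eq_neg_add, add_pow, add_pow, Finset.sum_mul_sum]
    refine Finset.sum_congr rfl fun i _ => Finset.sum_congr rfl fun j _ => ?_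
    simp only [smul_eq_C_mul, neg_pow (X : ℝ[X]), one_pow, C_mul, C_pow, C_neg, C_1, map_natCast]
    ring
  simp only [expand, map_sum, map_smul, momentFunctional_X_pow, smul_eq_mul]

namespace IsHausdorffPositive

variable {a b : ℝ} {s r : ℕ → ℝ}

theorem add (hs : IsHausdorffPositive a b s) (hr : IsHausdorffPositive a b r) :
    IsHausdorffPositive a b (s + r) := fun k l => by
  simpa only [map_add, LinearMap.add_apply] using add_nonneg (hs k l) (hr k l)

theorem smul (hs : IsHausdorffPositive a b s) {c : ℝ} (hc : 0 ≤ c) :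
    IsHausdorffPositive a b (c • s) := fun k l => by
  simpa only [map_smul, LinearMap.smul_apply, smul_eq_mul] using mul_nonneg hc (hs k l)

theorem localizedSeq_X_sub_C (hs : IsHausdorffPositive a b s) :
    IsHausdorffPositive a b (localizedSeq (X - C a) s) := fun k l => by
  rw [momentFunctional_localizedSeq, ← mul_assoc, ← pow_succ']
  exact hs (k + 1) l

theorem localizedSeq_C_sub_X (hs : IsHausdorffPositive a b s) :
    IsHausdorffPositive a b (localizedSeq (C b - X) s) := fun k l => by
  rw [momentFunctional_localizedSeq, mul_left_comm, ← pow_succ']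
  exact hs k (l + 1)

theorem apply_zero_nonneg (hs : IsHausdorffPositive a b s) : 0 ≤ s 0 := by
  simpa [momentFunctional_one] using hs 0 0

theorem mul_apply_zero_le_apply_one (hs : IsHausdorffPositive a b s) : a * s 0 ≤ s 1 := by
  simpa [_root_.localizedSeq_X_sub_C] using hs.localizedSeq_X_sub_C.apply_zero_nonneg

theorem apply_one_le_mul_apply_zero (hs : IsHausdorffPositive a b s) : s 1 ≤ b * s 0 := by
  simpa [_root_.localizedSeq_C_sub_X] using hs.localizedSeq_C_sub_X.apply_zero_nonneg

theorem abs_apply_le (hs : IsHausdorffPositive a b s) (n : ℕ) :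
    |s n| ≤ (|b - a| + |a|) ^ n * s 0 := by
  induction n generalizing s with
  | zero => simp [abs_of_nonneg hs.apply_zero_nonneg]
  | succ n ih =>
    have shift_le : |s (n + 1) - a * s n| ≤ (|b - a| + |a|) ^ n * (s 1 - a * s 0) := by
      simpa [_root_.localizedSeq_X_sub_C] using ih hs.localizedSeq_X_sub_C
    have shift_zero_le : s 1 - a * s 0 ≤ |b - a| * s 0 := by
      nlinarith [le_abs_self (b - a), hs.apply_zero_nonneg, hs.apply_one_le_mul_apply_zero]
    calc |s (n + 1)| = |(s (n + 1) - a * s n) + a * s n| := by rw [sub_add_cancel]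
      _ ≤ |s (n + 1) - a * s n| + |a| * |s n| := by
        rw [← abs_mul]
        exact abs_add_le _ _
      _ ≤ (|b - a| + |a|) ^ n * (|b - a| * s 0) + |a| * ((|b - a| + |a|) ^ n * s 0) := by
        gcongr
        · exact shift_le.trans (by gcongr)
        · exact ih hs
      _ = (|b - a| + |a|) ^ (n + 1) * s 0 := by ring

end IsHausdorffPositive

/-- The slice `s 0 = 1` of the cone of Hausdorff-positive sequences, the set of candidates for
moment sequences of probability measures on `[a, b]`. -/
def hausdorffSlice (a b : ℝ) : Set (ℕ → ℝ) :=
  {s | s 0 = 1 ∧ IsHausdorffPositive a b s}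

section HausdorffSlice

variable {a b : ℝ}

theorem convex_hausdorffSlice : Convex ℝ (hausdorffSlice a b) := by
  rintro s ⟨hs0, hs⟩ r ⟨hr0, hr⟩ c d hc hd hcd
  exact ⟨by simp [hs0, hr0, hcd], (hs.smul hc).add (hr.smul hd)⟩

theorem isCompact_hausdorffSlice : IsCompact (hausdorffSlice a b) := by
  have closed : IsClosed (hausdorffSlice a b) := by
    simp only [hausdorffSlice, IsHausdorffPositive, Set.ofPred_and, Set.ofPred_forall]
    exact (isClosed_eq (continuous_apply 0) continuous_const).inter <| isClosed_iInter fun k =>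
      isClosed_iInter fun l => isClosed_le continuous_const (continuous_momentFunctional _)
  refine (isCompact_univ_pi fun n => isCompact_Icc (a := -(|b - a| + |a|) ^ n)
    (b := (|b - a| + |a|) ^ n)).of_isClosed_subset closed ?_
  rintro s ⟨hs0, hs⟩ n -
  simpa [hs0, abs_le] using hs.abs_apply_le n

/- With `δ n = s (n + 1) - s 1 * s n`, both `s + ε δ` and `s - ε δ` lie in the slice for small
`ε > 0`, because `δ = (X - a) • s - (s 1 - a) s = (b - s 1) s - (b - X) • s`. Hence `δ = 0`. -/
theorem apply_succ_of_mem_extremePoints_hausdorffSlice {s : ℕ → ℝ}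
    (hs : s ∈ (hausdorffSlice a b).extremePoints ℝ) (n : ℕ) : s (n + 1) = s 1 * s n := by
  obtain ⟨⟨hs0, hpos⟩, hext⟩ := hs
  have ha : a ≤ s 1 := by simpa [hs0] using hpos.mul_apply_zero_le_apply_one
  have hb : s 1 ≤ b := by simpa [hs0] using hpos.apply_one_le_mul_apply_zero
  set ε := (b - a + 1)⁻¹ with hε
  have hε0 : 0 < ε := inv_pos.2 (by linarith)
  have hεα : 0 ≤ 1 - ε * (s 1 - a) := by
    rw [hε, sub_nonneg, inv_mul_le_one₀ (by linarith)]
    linarith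
  have hεβ : 0 ≤ 1 - ε * (b - s 1) := by
    rw [hε, sub_nonneg, inv_mul_le_one₀ (by linarith)]
    linarith
  set δ : ℕ → ℝ := fun n => s (n + 1) - s 1 * s n with hδ
  have mem_add : s + ε • δ ∈ hausdorffSlice a b := by
    refine ⟨by simp [hδ, hs0], ?_⟩
    convert (hpos.smul hεα).add (hpos.localizedSeq_X_sub_C.smul hε0.le) using 1
    ext m
    simp only [hδ, localizedSeq_X_sub_C, Pi.add_apply, Pi.smul_apply, smul_eq_mul]
    ring
  have mem_sub : s - ε • δ ∈ hausdorffSlice a b := by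
    refine ⟨by simp [hδ, hs0], ?_⟩
    convert (hpos.smul hεβ).add (hpos.localizedSeq_C_sub_X.smul hε0.le) using 1
    ext m
    simp only [hδ, localizedSeq_C_sub_X, Pi.add_apply, Pi.sub_apply, Pi.smul_apply, smul_eq_mul]
    ring
  have mid : s ∈ openSegment ℝ (s + ε • δ) (s - ε • δ) :=
    ⟨1 / 2, 1 / 2, by norm_num, by norm_num, by norm_num, by module⟩
  have hδ0 : ε • δ = 0 := by simpa using hext mem_add mem_sub mid
  simpa [hδ, hε0.ne', sub_eq_zero] using congrFun hδ0 n

theorem apply_eq_pow_of_mem_extremePoints_hausdorffSlice {s : ℕ → ℝ}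
    (hs : s ∈ (hausdorffSlice a b).extremePoints ℝ) (n : ℕ) : s n = s 1 ^ n := by
  induction n with
  | zero => simpa using hs.1.1
  | succ n ih => rw [apply_succ_of_mem_extremePoints_hausdorffSlice hs, ih, pow_succ']

end HausdorffSlice

section ProbabilityMoments

/-- The moment sequence of a probability measure on `K ⊆ ℝ`. -/
noncomputable def probabilityMoments (K : Set ℝ) (μ : ProbabilityMeasure K) : ℕ → ℝ :=
  fun n => ∫ x, (x : ℝ) ^ n ∂(μ : Measure K)

variable {K : Set ℝ} [CompactSpace K]

theorem integrable_coe_pow (μ : Measure K) [IsFiniteMeasure μ] (n : ℕ) :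
    Integrable (fun x : K => (x : ℝ) ^ n) μ :=
  Continuous.integrable_of_hasCompactSupport (by fun_prop) (.of_compactSpace _)

theorem continuous_probabilityMoments : Continuous (probabilityMoments K) :=
  continuous_pi fun n => continuous_iff_continuousAt.2 fun _ =>
    ProbabilityMeasure.tendsto_iff_forall_integral_tendsto.1 Filter.tendsto_id
      (.mkOfCompact ⟨fun x : K => (x : ℝ) ^ n, by fun_prop⟩)

theorem convex_range_probabilityMoments : Convex ℝ (Set.range (probabilityMoments K)) := by
  rintro _ ⟨μ, rfl⟩ _ ⟨ν, rfl⟩ c d hc hd hcd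
  lift c to NNReal using hc
  lift d to NNReal using hd
  have prob : IsProbabilityMeasure (c • (μ : Measure K) + d • (ν : Measure K)) :=
    ⟨by simpa using mod_cast hcd⟩
  refine ⟨⟨_, prob⟩, funext fun n => ?_⟩
  simp only [probabilityMoments, ProbabilityMeasure.coe_mk, Pi.add_apply, Pi.smul_apply]
  rw [integral_add_measure (integrable_coe_pow _ n) (integrable_coe_pow _ n),
    integral_smul_nnreal_measure, integral_smul_nnreal_measure]
  rfl

theorem hausdorffSlice_subset_range_probabilityMoments {a b : ℝ} :
    hausdorffSlice a b ⊆ Set.range (probabilityMoments (Set.Icc a b)) := by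
  have extremePoints_subset :
      (hausdorffSlice a b).extremePoints ℝ ⊆ Set.range (probabilityMoments (Set.Icc a b)) := by
    intro s hs
    obtain ⟨hs0, hpos⟩ := hs.1
    have mem : s 1 ∈ Set.Icc a b :=
      ⟨by simpa [hs0] using hpos.mul_apply_zero_le_apply_one,
        by simpa [hs0] using hpos.apply_one_le_mul_apply_zero⟩
    refine ⟨⟨Measure.dirac ⟨s 1, mem⟩, inferInstance⟩, funext fun n => ?_⟩
    simp [probabilityMoments, apply_eq_pow_of_mem_extremePoints_hausdorffSlice hs n]
  rw [← closure_convexHull_extremePoints isCompact_hausdorffSlice convex_hausdorffSlice]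
  exact closure_minimal (convexHull_min extremePoints_subset convex_range_probabilityMoments)
    (isCompact_range continuous_probabilityMoments).isClosed

end ProbabilityMoments

/-- `s` is the moment sequence of a finite positive measure on `ℝ` carried by `K`. -/
def IsMomentSeq (s : ℕ → ℝ) (K : Set ℝ) : Prop :=
  ∃ μ : Measure ℝ, IsFiniteMeasure μ ∧ μ Kᶜ = 0 ∧ ∀ n, s n = ∫ x, x ^ n ∂μ

theorem integrable_of_measure_compl_eq_zero {α E : Type*} [TopologicalSpace α] [T2Space α]
    [MeasurableSpace α] [OpensMeasurableSpace α] [NormedAddCommGroup E]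
    {μ : Measure α} [IsFiniteMeasureOnCompacts μ] {K : Set α} (hK : IsCompact K) (hμ : μ Kᶜ = 0)
    {f : α → E} (hf : ContinuousOn f K) : Integrable f μ := by
  have mem_ae : ∀ᵐ x ∂μ, x ∈ K := mem_ae_iff.2 hμ
  rw [← Measure.restrict_eq_self_of_ae_mem mem_ae]
  exact hf.integrableOn_compact hK

theorem isMomentSeq_probabilityMoments {K : Set ℝ} (hK : MeasurableSet K)
    (μ : ProbabilityMeasure K) : IsMomentSeq (probabilityMoments K μ) K :=
  ⟨(μ : Measure K).map Subtype.val, inferInstance, by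
    simp [Measure.map_apply measurable_subtype_coe hK.compl], fun n => by
    rw [(MeasurableEmbedding.subtype_coe hK).integral_map]
    rfl⟩

theorem IsMomentSeq.smul {s : ℕ → ℝ} {K : Set ℝ} (hs : IsMomentSeq s K) {c : ℝ} (hc : 0 ≤ c) :
    IsMomentSeq (c • s) K := by
  obtain ⟨μ, _, hμ, hmom⟩ := hs
  lift c to NNReal using hc
  exact ⟨c • μ, inferInstance, by simp [hμ], fun n => by
    rw [integral_smul_nnreal_measure, ← hmom n]
    rfl⟩

theorem IsMomentSeq.isHausdorffPositive {a b : ℝ} {s : ℕ → ℝ} (hs : IsMomentSeq s (Set.Icc a b)) :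
    IsHausdorffPositive a b s := fun k l => by
  obtain ⟨μ, _, hμ, hmom⟩ := hs
  rw [funext hmom, momentFunctional_moments fun n =>
    integrable_of_measure_compl_eq_zero isCompact_Icc hμ (continuous_pow n).continuousOn]
  refine integral_nonneg_of_ae ?_
  filter_upwards [mem_ae_iff.2 hμ] with x hx
  simpa using mul_nonneg (pow_nonneg (sub_nonneg.2 hx.1) k) (pow_nonneg (sub_nonneg.2 hx.2) l)

theorem IsHausdorffPositive.isMomentSeq {a b : ℝ} {s : ℕ → ℝ} (hs : IsHausdorffPositive a b s) :
    IsMomentSeq s (Set.Icc a b) := by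
  obtain hs0 | hs0 := hs.apply_zero_nonneg.eq_or_lt
  · have hs_zero : s = 0 := funext fun n => by simpa [← hs0] using hs.abs_apply_le n
    exact ⟨0, inferInstance, by simp, by simp [hs_zero]⟩
  · have mem : (s 0)⁻¹ • s ∈ hausdorffSlice a b :=
      ⟨inv_mul_cancel₀ hs0.ne', hs.smul (inv_nonneg.2 hs0.le)⟩
    obtain ⟨μ, hμ⟩ := hausdorffSlice_subset_range_probabilityMoments mem
    have := (isMomentSeq_probabilityMoments measurableSet_Icc μ).smul hs0.le
    rwa [hμ, smul_inv_smul₀ hs0.ne'] at this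

theorem isMomentSeq_Icc_iff_isHausdorffPositive {a b : ℝ} {s : ℕ → ℝ} :
    IsMomentSeq s (Set.Icc a b) ↔ IsHausdorffPositive a b s :=
  ⟨IsMomentSeq.isHausdorffPositive, IsHausdorffPositive.isMomentSeq⟩

section Determinacy

variable {K : Set ℝ}

theorem measure_eq_of_integral_coe_pow_eq [CompactSpace K] {μ ν : Measure K} [IsFiniteMeasure μ]
    [IsFiniteMeasure ν] (h : ∀ n : ℕ, ∫ x, (x : ℝ) ^ n ∂μ = ∫ x, (x : ℝ) ^ n ∂ν) : μ = ν := by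
  let A : StarSubalgebra ℝ (BoundedContinuousFunction K ℝ) :=
    { (polynomialFunctions K).comap (BoundedContinuousFunction.toContinuousMapₐ ℝ) with
      star_mem' := id }
  refine ext_of_forall_mem_subalgebra_integral_eq_of_pseudoEMetric_complete_countable (A := A)
    ?_ ?_
  · intro x y hxy
    obtain ⟨_, ⟨f, hf, rfl⟩, hne⟩ := polynomialFunctions_separatesPoints K hxy
    exact ⟨f, ⟨_, ⟨.mkOfCompact f, hf, rfl⟩, rfl⟩, hne⟩
  · rintro g ⟨p, -, hp⟩
    have eval_eq (x : K) : g x = p.eval (x : ℝ) := (DFunLike.congr_fun hp x).symm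
    simp only [eval_eq, ← momentFunctional_moments (integrable_coe_pow _), h]

theorem measure_eq_of_integral_pow_eq (hK : IsCompact K) {μ ν : Measure ℝ} [IsFiniteMeasure μ]
    [IsFiniteMeasure ν] (hμ : μ Kᶜ = 0) (hν : ν Kᶜ = 0)
    (h : ∀ n : ℕ, ∫ x, x ^ n ∂μ = ∫ x, x ^ n ∂ν) : μ = ν := by
  have : CompactSpace K := isCompact_iff_compactSpace.1 hK
  have hμK : μ.restrict K = μ := Measure.restrict_eq_self_of_ae_mem (mem_ae_iff.2 hμ)
  have hνK : ν.restrict K = ν := Measure.restrict_eq_self_of_ae_mem (mem_ae_iff.2 hν)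
  have comap_eq : μ.comap ((↑) : K → ℝ) = ν.comap (↑) :=
    measure_eq_of_integral_coe_pow_eq fun n => by
      rw [integral_subtype_comap hK.measurableSet fun x : ℝ => x ^ n,
        integral_subtype_comap hK.measurableSet fun x : ℝ => x ^ n, hμK, hνK, h n]
  rw [← hμK, ← hνK, ← map_comap_subtype_coe hK.measurableSet,
    ← map_comap_subtype_coe hK.measurableSet, comap_eq]

end Determinacy

section SignedIntegral

variable {α : Type*} [MeasurableSpace α] {s r : SignedMeasure α} {f : α → ℝ}

theorem integrable_toSignedMeasure_iff {μ : Measure α} [IsFiniteMeasure μ] :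
    VectorMeasure.Integrable μ.toSignedMeasure f ↔ Integrable f μ := by
  rw [VectorMeasure.Integrable, Measure.variation_toSignedMeasure]

theorem sInt_eq_integral (hf : s.Integrable f) : sInt s f = ∫ᵛ x, f x ∂<•s := by
  have hf' : Integrable f s.totalVariation := by
    rwa [SignedMeasure.totalVariation_eq_variation]
  have hpos := hf'.left_of_add_measure
  have hneg := hf'.right_of_add_measure
  conv_rhs => rw [← s.toSignedMeasure_toJordanDecomposition, JordanDecomposition.toSignedMeasure]
  rw [VectorMeasure.integral_sub_vectorMeasure (integrable_toSignedMeasure_iff.2 hpos)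
      (integrable_toSignedMeasure_iff.2 hneg),
    VectorMeasure.integral_toSignedMeasure, VectorMeasure.integral_toSignedMeasure, sInt]

theorem sInt_sub (hs : s.Integrable f) (hr : r.Integrable f) :
    sInt (s - r) f = sInt s f - sInt r f := by
  rw [sInt_eq_integral (hs.sub_vectorMeasure hr), VectorMeasure.integral_sub_vectorMeasure hs hr,
    sInt_eq_integral hs, sInt_eq_integral hr]

theorem sInt_toSignedMeasure {μ : Measure α} [IsFiniteMeasure μ] (hf : Integrable f μ) :
    sInt μ.toSignedMeasure f = ∫ x, f x ∂μ := by
  rw [sInt_eq_integral (integrable_toSignedMeasure_iff.2 hf),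
    VectorMeasure.integral_toSignedMeasure]

theorem totalVariation_toSignedMeasure (μ : Measure α) [IsFiniteMeasure μ] :
    μ.toSignedMeasure.totalVariation = μ := by
  rw [SignedMeasure.totalVariation_eq_variation, Measure.variation_toSignedMeasure]

theorem exists_toSignedMeasure_eq_of_nonneg (hs : 0 ≤ s) :
    ∃ μ : Measure α, ∃ _ : IsFiniteMeasure μ, μ.toSignedMeasure = s :=
  have hs_univ := (VectorMeasure.le_restrict_univ_iff_le 0 s).2 hs
  ⟨_, s.toMeasureOfZeroLE_finite hs_univ .univ, s.toMeasureOfZeroLE_toSignedMeasure hs_univ⟩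

theorem integrable_of_totalVariation_compl_eq_zero [TopologicalSpace α] [T2Space α]
    [OpensMeasurableSpace α] {K : Set α} (hK : IsCompact K) (hs : s.totalVariation Kᶜ = 0)
    (hf : ContinuousOn f K) : s.Integrable f := by
  rw [SignedMeasure.totalVariation_eq_variation] at hs
  have : IsFiniteMeasure s.variation := by
    rw [← SignedMeasure.totalVariation_eq_variation]
    infer_instance
  exact integrable_of_measure_compl_eq_zero hK hs hf

theorem signedMeasure_eq_of_sInt_pow_eq {s r : SignedMeasure ℝ} {K : Set ℝ} (hK : IsCompact K)
    (hs : s.totalVariation Kᶜ = 0) (hr : r.totalVariation Kᶜ = 0)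
    (h : ∀ n : ℕ, sInt s (fun x => x ^ n) = sInt r fun x => x ^ n) : s = r := by
  rw [SignedMeasure.totalVariation, Measure.add_apply, add_eq_zero] at hs hr
  have integrable {μ : Measure ℝ} [IsFiniteMeasure μ] (hμ : μ Kᶜ = 0) (n : ℕ) :
      Integrable (fun x => x ^ n) μ :=
    integrable_of_measure_compl_eq_zero hK hμ (continuous_pow n).continuousOn
  have h_add : s.toJordanDecomposition.posPart + r.toJordanDecomposition.negPart =
      r.toJordanDecomposition.posPart + s.toJordanDecomposition.negPart := by
    refine measure_eq_of_integral_pow_eq hK (by simp [hs, hr]) (by simp [hs, hr]) fun n => ?_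
    rw [integral_add_measure (integrable hs.1 n) (integrable hr.2 n),
      integral_add_measure (integrable hr.1 n) (integrable hs.2 n), ← sub_eq_sub_iff_add_eq_add]
    exact h n
  rw [← s.toSignedMeasure_toJordanDecomposition, ← r.toSignedMeasure_toJordanDecomposition,
    JordanDecomposition.toSignedMeasure, JordanDecomposition.toSignedMeasure,
    sub_eq_sub_iff_add_eq_add, ← Measure.toSignedMeasure_add, ← Measure.toSignedMeasure_add]
  exact Measure.toSignedMeasure_congr h_add

end SignedIntegral

section TraceMeas

variable {ι α : Type*} [Fintype ι] [MeasurableSpace α] (G : Matrix ι ι ℝ)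
  (E : ι → ι → SignedMeasure α)

/-- The scalar measure `tr (G E)` of a matrix-valued measure `E`. -/
noncomputable def traceMeas : SignedMeasure α :=
  ∑ i, ∑ j, G i j • E j i

theorem traceMeas_apply (A : Set α) :
    traceMeas G E A = (G * Matrix.of fun i j => E i j A).trace := by
  simp [traceMeas, Matrix.trace, Matrix.mul_apply]

variable {E}

theorem totalVariation_traceMeas_eq_zero {A : Set α} (hA : MeasurableSet A)
    (hE : ∀ i j, (E i j).totalVariation A = 0) : (traceMeas G E).totalVariation A = 0 := by
  simp only [SignedMeasure.totalVariation_eq_variation,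
    VectorMeasure.variation_apply_eq_zero hA] at hE ⊢
  intro B hBA hB
  have entries_eq_zero : (Matrix.of fun i j => E i j B) = 0 :=
    Matrix.ext fun i j => hE i j B hBA hB
  rw [traceMeas_apply, entries_eq_zero, mul_zero, Matrix.trace_zero]

theorem sInt_traceMeas {f : α → ℝ} (hf : ∀ i j, (E i j).Integrable f) :
    sInt (traceMeas G E) f = (G * Matrix.of fun i j => sInt (E i j) f).trace := by
  have integrable_smul (i j : ι) : (G i j • E j i).Integrable f := (hf j i).smul_vectorMeasure _
  have integrable_sum (i : ι) : (∑ j, G i j • E j i).Integrable f :=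
    .finsetSum_vectorMeasure fun j _ => integrable_smul i j
  rw [traceMeas, sInt_eq_integral (.finsetSum_vectorMeasure fun i _ => integrable_sum i),
    VectorMeasure.integral_finsetSum_vectorMeasure fun i _ => integrable_sum i]
  simp only [Matrix.trace, Matrix.diag_apply, Matrix.mul_apply, Matrix.of_apply]
  refine Finset.sum_congr rfl fun i _ => ?_
  rw [VectorMeasure.integral_finsetSum_vectorMeasure fun j _ => integrable_smul i j]
  refine Finset.sum_congr rfl fun j _ => ?_
  rw [VectorMeasure.integral_smul_vectorMeasure, ← sInt_eq_integral (hf j i), smul_eq_mul]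

end TraceMeas

section PosSemidef

variable {ι 𝕜 : Type*} [RCLike 𝕜]

open scoped ComplexOrder

theorem trace_mul_nonneg_of_posSemidef [Fintype ι] {G M : Matrix ι ι 𝕜} (hG : G.PosSemidef)
    (hM : M.PosSemidef) : 0 ≤ (G * M).trace := by
  classical
  obtain ⟨B, rfl⟩ : ∃ B : Matrix ι ι 𝕜, G = Bᴴ * B := by
    open scoped MatrixOrder in exact CStarAlgebra.nonneg_iff_eq_star_mul_self.1 hG.nonneg
  rw [Matrix.mul_assoc, Matrix.trace_mul_comm]
  exact (hM.mul_mul_conjTranspose_same B).trace_nonneg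

theorem posSemidef_mem_closure_posDef [Finite ι] {G : Matrix ι ι 𝕜} (hG : G.PosSemidef) :
    G ∈ closure {G : Matrix ι ι 𝕜 | G.PosDef} := by
  classical
  have continuous_perturb : Continuous fun ε : ℝ => G + ε • 1 := by fun_prop
  have tendsto_perturb : Filter.Tendsto (fun ε : ℝ => G + ε • 1) (𝓝[>] 0) (𝓝 G) := by
    simpa using (continuous_perturb.tendsto 0).mono_left nhdsWithin_le_nhds
  refine mem_closure_of_tendsto tendsto_perturb ?_
  filter_upwards [self_mem_nhdsWithin] with ε hε
  exact Matrix.PosDef.posSemidef_add hG (Matrix.PosDef.one.smul hε)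

end PosSemidef

section QuadraticForm

variable {ι R : Type*} [Fintype ι]

theorem trace_vecMulVec_mul [CommSemiring R] (v w : ι → R) (M : Matrix ι ι R) :
    (vecMulVec v w * M).trace = w ⬝ᵥ M *ᵥ v := by
  rw [vecMulVec_mul, trace_vecMulVec, dotProduct_comm, dotProduct_mulVec]

theorem dotProduct_mulVec_polarization [Field R] [NeZero (2 : R)] {M : Matrix ι ι R}
    (hM : M.IsSymm) (v w : ι → R) :
    ((1 / 2 : R) • (v + w)) ⬝ᵥ M *ᵥ ((1 / 2 : R) • (v + w)) -
      ((1 / 2 : R) • (v - w)) ⬝ᵥ M *ᵥ ((1 / 2 : R) • (v - w)) = v ⬝ᵥ M *ᵥ w := by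
  have comm : w ⬝ᵥ M *ᵥ v = v ⬝ᵥ M *ᵥ w := by
    rw [dotProduct_comm, dotProduct_mulVec, ← mulVec_transpose, hM.eq]
  simp only [mulVec_add, mulVec_sub, mulVec_smul, add_dotProduct, sub_dotProduct, smul_dotProduct,
    dotProduct_add, dotProduct_sub, dotProduct_smul, smul_eq_mul, comm]
  field_simp
  ring

end QuadraticForm

theorem isMomentSeq_sInt_of_nonneg {s : SignedMeasure ℝ} {K : Set ℝ} (hK : IsCompact K)
    (hs : 0 ≤ s) (hsK : s.totalVariation Kᶜ = 0) :
    IsMomentSeq (fun n => sInt s fun x => x ^ n) K := by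
  obtain ⟨μ, _, rfl⟩ := exists_toSignedMeasure_eq_of_nonneg hs
  rw [totalVariation_toSignedMeasure] at hsK
  exact ⟨μ, inferInstance, hsK, fun n => sInt_toSignedMeasure <|
    integrable_of_measure_compl_eq_zero hK hsK (continuous_pow n).continuousOn⟩

section MatrixMoments

variable {t : ℕ} {S : ℕ → Matrix (Fin t) (Fin t) ℝ} {K : Set ℝ}

theorem SuppSubset.integrable_pow {E : Fin t → Fin t → SignedMeasure ℝ} (hE : SuppSubset E K)
    (hK : IsCompact K) (n : ℕ) (i j : Fin t) : (E i j).Integrable fun x : ℝ => x ^ n :=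
  integrable_of_totalVariation_compl_eq_zero hK (hE i j) (continuous_pow n).continuousOn

theorem IsPSDMatMeas.traceMeas_nonneg {E : Fin t → Fin t → SignedMeasure ℝ}
    (hE : IsPSDMatMeas E) {G : Matrix (Fin t) (Fin t) ℝ} (hG : G.PosSemidef) :
    0 ≤ traceMeas G E := fun A hA => by
  rw [traceMeas_apply]
  exact trace_mul_nonneg_of_posSemidef hG (hE A hA)

theorem isPSDMatMeas_of_traceMeas_nonneg {E : Fin t → Fin t → SignedMeasure ℝ}
    (hsymm : ∀ i j, E i j = E j i) (h : ∀ v, 0 ≤ traceMeas (vecMulVec v v) E) :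
    IsPSDMatMeas E := fun A hA => by
  refine .of_dotProduct_mulVec_nonneg (Matrix.ext fun i j => ?_) fun v => ?_
  · simp [hsymm i j]
  · rw [star_trivial, ← trace_vecMulVec_mul, ← traceMeas_apply]
    exact h v A hA

theorem IsMatMomentSeq.isMomentSeq_trace (hS : IsMatMomentSeq S K) (hK : IsCompact K)
    {G : Matrix (Fin t) (Fin t) ℝ} (hG : G.PosSemidef) :
    IsMomentSeq (fun n => (G * S n).trace) K := by
  obtain ⟨E, hpsd, hsupp, hmom⟩ := hS
  have trace_eq (n : ℕ) : (G * S n).trace = sInt (traceMeas G E) fun x => x ^ n := by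
    rw [sInt_traceMeas G (hsupp.integrable_pow hK n)]
    congr 2
    exact Matrix.ext (hmom n)
  rw [funext trace_eq]
  exact isMomentSeq_sInt_of_nonneg hK (hpsd.traceMeas_nonneg hG)
    (totalVariation_traceMeas_eq_zero G hK.measurableSet.compl hsupp)

/-- The matrix of signed measures recovered by polarization from a family `q` of scalar measures,
where `q v` prescribes the value at `v` of the associated measure-valued quadratic form. -/
noncomputable def polarizedMeas {ι α : Type*} [DecidableEq ι] [MeasurableSpace α]
    (q : (ι → ℝ) → SignedMeasure α) (i j : ι) : SignedMeasure α :=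
  q ((1 / 2 : ℝ) • (Pi.single i 1 + Pi.single j 1)) -
    q ((1 / 2 : ℝ) • (Pi.single i 1 - Pi.single j 1))

theorem suppSubset_polarizedMeas {q : (Fin t → ℝ) → SignedMeasure ℝ}
    (hq : ∀ v, (q v).totalVariation Kᶜ = 0) : SuppSubset (polarizedMeas q) K := fun i j => by
  simp only [SignedMeasure.totalVariation_eq_variation] at hq ⊢
  exact nonpos_iff_eq_zero.1 <| (VectorMeasure.variation_sub_le Kᶜ).trans_eq (by simp [hq])

theorem sInt_pow_polarizedMeas (hK : IsCompact K) (hS : ∀ n, (S n).IsSymm)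
    {q : (Fin t → ℝ) → SignedMeasure ℝ} (hq : ∀ v, (q v).totalVariation Kᶜ = 0)
    (hmom : ∀ v n, (sInt (q v) fun x => x ^ n) = v ⬝ᵥ S n *ᵥ v) (n : ℕ) (i j : Fin t) :
    (sInt (polarizedMeas q i j) fun x => x ^ n) = S n i j := by
  have integrable (v : Fin t → ℝ) : (q v).Integrable fun x : ℝ => x ^ n :=
    integrable_of_totalVariation_compl_eq_zero hK (hq v) (continuous_pow n).continuousOn
  rw [polarizedMeas, sInt_sub (integrable _) (integrable _), hmom, hmom,
    dotProduct_mulVec_polarization (hS n)]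
  simp

theorem isMatMomentSeq_of_isMomentSeq_quadraticForm (hK : IsCompact K) (hS : ∀ n, (S n).IsSymm)
    (h : ∀ v, IsMomentSeq (fun n => v ⬝ᵥ S n *ᵥ v) K) : IsMatMomentSeq S K := by
  choose μ _ hμ hmom using h
  set q : (Fin t → ℝ) → SignedMeasure ℝ := fun v => (μ v).toSignedMeasure
  have supp_q (v) : (q v).totalVariation Kᶜ = 0 := by
    rw [totalVariation_toSignedMeasure, hμ]
  have mom_q (v n) : (sInt (q v) fun x => x ^ n) = v ⬝ᵥ S n *ᵥ v := by
    refine (sInt_toSignedMeasure ?_).trans (hmom v n).symm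
    exact integrable_of_measure_compl_eq_zero hK (hμ v) (continuous_pow n).continuousOn
  have supp_E : SuppSubset (polarizedMeas q) K := suppSubset_polarizedMeas supp_q
  have mom_E := sInt_pow_polarizedMeas hK hS supp_q mom_q
  have symm_E (i j) : polarizedMeas q i j = polarizedMeas q j i :=
    signedMeasure_eq_of_sInt_pow_eq hK (supp_E i j) (supp_E j i) fun n => by
      rw [mom_E, mom_E, (hS n).apply]
  have quadraticForm_E (v) : traceMeas (vecMulVec v v) (polarizedMeas q) = q v := by
    refine signedMeasure_eq_of_sInt_pow_eq hK
      (totalVariation_traceMeas_eq_zero _ hK.measurableSet.compl supp_E) (supp_q v) fun n => ?_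
    have entries : (Matrix.of fun i j => sInt (polarizedMeas q i j) fun x => x ^ n) = S n :=
      Matrix.ext (mom_E n)
    rw [sInt_traceMeas _ (supp_E.integrable_pow hK n), entries, trace_vecMulVec_mul, mom_q]
  refine ⟨polarizedMeas q, isPSDMatMeas_of_traceMeas_nonneg symm_E fun v => ?_, supp_E,
    fun n i j => (mom_E n i j).symm⟩
  rw [quadraticForm_E]
  exact Measure.zero_le_toSignedMeasure (μ v)

theorem isMatMomentSeq_iff_isMomentSeq_trace (hK : IsCompact K) (hS : ∀ n, (S n).IsSymm) :
    IsMatMomentSeq S K ↔ ∀ G : Matrix (Fin t) (Fin t) ℝ, G.PosSemidef →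
      IsMomentSeq (fun n => (G * S n).trace) K := by
  refine ⟨fun h G hG => h.isMomentSeq_trace hK hG, fun h => ?_⟩
  refine isMatMomentSeq_of_isMomentSeq_quadraticForm hK hS fun v => ?_
  simpa only [trace_vecMulVec_mul, star_trivial] using h _ (posSemidef_vecMulVec_self_star v)

theorem isHausdorffPositive_trace_of_posDef {a b : ℝ}
    (h : ∀ G : Matrix (Fin t) (Fin t) ℝ, G.PosDef →
      IsHausdorffPositive a b fun n => (G * S n).trace)
    {G : Matrix (Fin t) (Fin t) ℝ} (hG : G.PosSemidef) :
    IsHausdorffPositive a b fun n => (G * S n).trace := by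
  intro k l
  have continuous_trace : Continuous fun (G : Matrix (Fin t) (Fin t) ℝ) n => (G * S n).trace := by
    fun_prop
  have isClosed_nonneg : IsClosed {G : Matrix (Fin t) (Fin t) ℝ |
      0 ≤ momentFunctional (fun n => (G * S n).trace) ((X - C a) ^ k * (C b - X) ^ l)} :=
    isClosed_le continuous_const <|
      (continuous_momentFunctional ((X - C a) ^ k * (C b - X) ^ l)).comp continuous_trace
  exact closure_minimal (fun G hG => h G hG k l) isClosed_nonneg (posSemidef_mem_closure_posDef hG)

end MatrixMoments

theorem matMomentSeq_Icc_neg_one_one_iff_general (t : ℕ) (S : ℕ → Matrix (Fin t) (Fin t) ℝ)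
    (hS : ∀ i, (S i).IsSymm) (a b : ℝ) :
    IsMatMomentSeq S (Set.Icc a b) ↔ ∀ G : Matrix (Fin t) (Fin t) ℝ, G.PosDef →
      IsHausdorffPositive a b fun n => (G * S n).trace := by
  simp only [isMatMomentSeq_iff_isMomentSeq_trace isCompact_Icc hS,
    isMomentSeq_Icc_iff_isHausdorffPositive]
  exact ⟨fun h G hG => h G hG.posSemidef, fun h _ => isHausdorffPositive_trace_of_posDef h⟩

/-- a sequence `S` of symmetric matrices is a matrix-valued `[-1,1]`-moment
sequence iff `Σᵢ Σⱼ (-1)^j C(k,i) C(l,j) tr(G S_{i+j}) ≥ 0` for all positive definite `G`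
and all `k, l ∈ ℕ`. -/
theorem matMomentSeq_Icc_neg_one_one_iff (t : ℕ)
    (S : ℕ → Matrix (Fin t) (Fin t) ℝ) (hS : ∀ i, (S i).IsSymm) :
    IsMatMomentSeq S (Set.Icc (-1 : ℝ) 1) ↔
      ∀ G : Matrix (Fin t) (Fin t) ℝ, G.PosDef → ∀ k l : ℕ,
        0 ≤ ∑ i ∈ Finset.range (k + 1), ∑ j ∈ Finset.range (l + 1),
          (-1 : ℝ) ^ j * (k.choose i : ℝ) * (l.choose j : ℝ) * (G * S (i + j)).trace :=
  (matMomentSeq_Icc_neg_one_one_iff_general t S hS (-1) 1).trans <|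
    forall₂_congr fun _ _ => isHausdorffPositive_neg_one_one_iff
end

section
/- Let K = {x ∈ ℝⁿ : L₁(x) ≥ 0, …, L_m(x) ≥ 0} be a convex, compact polyhedron with non-empty interior, defined by linear polynomials L₁, …, L_m ∈ ℝ[X₁,…,Xₙ]. Let F ∈ S_t(ℝ[X₁,…,Xₙ]) be a symmetric matrix polynomial of degree d > 0 such that F(x) is positive definite for all x ∈ K. Then there exist a positive integer N and positive definite matrices G_α ∈ M_t(ℝ), for α ∈ ℕ₀^m with |α| = 0, …, N+d, such that F(X) = Σ_{|α|=0}^{N+d} G_α L₁^{α₁} ⋯ L_m^{α_m}. -/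
/-!
Since the polyhedron is bounded, no nonzero functional is nonnegative on all linear parts of the
`Lᵢ`, so by Stiemke's lemma some combination of the `Lᵢ` with positive weights is a constant. After
rescaling, the `Lᵢ` and the constant `1` become a family `ℓ` of generators of the polynomial ring
with sum `1`, and the characters nonnegative on `ℓ` are the evaluations at points of `K`.

Lift `F` along `ℓ` to a matrix polynomial `P` on the standard simplex. It is positive definite at
the common zeros of the relations between the `ℓᵢ`, and by compactness it becomes so on the whole
simplex once a large multiple of the sum of squares of generating relations is added. As in the
proof of Pólya's theorem, the coefficients of `P` in the Bernstein basis of degree `N` are, up to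
`O(1/N)`, its values at the points `α / N`, so they are positive definite for all large `N`.
-/

open MvPolynomial Finset Filter Topology
open scoped Matrix

section Compactness

theorem exists_nat_forall_pos_add_mul {Z : Type*} [TopologicalSpace Z] {S : Set Z}
    (hS : IsCompact S) {f g : Z → ℝ} (hf : Continuous f) (hg : Continuous g)
    (hg0 : ∀ z ∈ S, 0 ≤ g z) (hfg : ∀ z ∈ S, g z = 0 → 0 < f z) :
    ∃ k : ℕ, ∀ z ∈ S, 0 < f z + k * g z := by
  let U : ℕ → Set Z := fun k ↦ {z | 0 < f z + k * |g z|}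
  have hUopen : ∀ k, IsOpen (U k) := fun k ↦ isOpen_lt (by fun_prop) (by fun_prop)
  have hUmono : Monotone U := fun k l hkl z (hz : 0 < f z + k * |g z|) ↦
    hz.trans_le (by gcongr)
  have hUcover : S ⊆ ⋃ k, U k := by
    intro z hz
    rcases (abs_nonneg (g z)).eq_or_lt' with h0 | hpos
    · exact Set.mem_iUnion.2 ⟨0, by simpa [U] using hfg z hz (abs_eq_zero.1 h0)⟩
    · obtain ⟨k, hk⟩ := exists_nat_gt (-f z / |g z|)
      rw [div_lt_iff₀ hpos] at hk
      exact Set.mem_iUnion.2 ⟨k, by simp only [U, Set.mem_ofPred_eq]; linarith⟩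
  obtain ⟨k, hk⟩ := hS.elim_directed_cover U hUopen hUcover hUmono.directed_le
  exact ⟨k, fun z hz ↦ by simpa [U, abs_of_nonneg (hg0 z hz)] using hk hz⟩

theorem posDef_of_forall_mem_sphere {κ : Type*} [Fintype κ] {M : Matrix κ κ ℝ} (hM : M.IsSymm)
    (h : ∀ v ∈ Metric.sphere (0 : κ → ℝ) 1, 0 < v ⬝ᵥ M *ᵥ v) : M.PosDef := by
  refine .of_dotProduct_mulVec_pos (by simpa using hM) fun v hv ↦ ?_
  have hv' : 0 < ‖v‖ := norm_pos_iff.2 hv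
  have hunit := h (‖v‖⁻¹ • v) (by simp [norm_smul, hv'.ne'])
  rw [Matrix.mulVec_smul, smul_dotProduct, dotProduct_smul] at hunit
  simpa [hv'] using hunit

theorem eventually_forall_posDef {X Z κ : Type*} [TopologicalSpace X] [TopologicalSpace Z]
    [Finite κ] {S : Set Z} (hS : IsCompact S) {B : X → Z → Matrix κ κ ℝ} {x₀ : X}
    (hcont : ∀ z ∈ S, ContinuousAt (fun p : X × Z ↦ B p.1 p.2) (x₀, z))
    (hsymm : ∀ x, ∀ z ∈ S, (B x z).IsSymm) (hpos : ∀ z ∈ S, (B x₀ z).PosDef) :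
    ∀ᶠ x in 𝓝 x₀, ∀ z ∈ S, (B x z).PosDef := by
  cases nonempty_fintype κ
  have hquad : ∀ᶠ x in 𝓝 x₀, ∀ p ∈ S ×ˢ Metric.sphere (0 : κ → ℝ) 1,
      0 < p.2 ⬝ᵥ B x p.1 *ᵥ p.2 := by
    refine (hS.prod (isCompact_sphere 0 1)).eventually_forall_of_forall_eventually ?_
    rintro ⟨z, v⟩ ⟨hz, hv⟩
    have hv0 : v ≠ 0 := Metric.ne_of_mem_sphere hv one_ne_zero
    have hmat : ContinuousAt (fun p : X × Z × (κ → ℝ) ↦ B p.1 p.2.1) (x₀, z, v) :=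
      (hcont z hz).comp_of_eq
        (by fun_prop : ContinuousAt (fun p : X × Z × (κ → ℝ) ↦ (p.1, p.2.1)) _) rfl
    have hform : Continuous fun q : Matrix κ κ ℝ × (κ → ℝ) ↦ q.2 ⬝ᵥ q.1 *ᵥ q.2 := by fun_prop
    have hcomp := hform.continuousAt.comp (hmat.prodMk continuousAt_snd.snd)
    exact hcomp.eventually_const_lt (by simpa using (hpos z hz).dotProduct_mulVec_pos hv0)
  filter_upwards [hquad] with x hx z hz
  exact posDef_of_forall_mem_sphere (hsymm x z hz) fun v hv ↦ hx (z, v) ⟨hz, hv⟩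

theorem exists_nat_forall_posDef_add_smul_one {Z κ : Type*} [TopologicalSpace Z] [Finite κ]
    [DecidableEq κ] {S : Set Z} (hS : IsCompact S) {B : Z → Matrix κ κ ℝ} {g : Z → ℝ}
    (hB : Continuous B) (hg : Continuous g) (hsymm : ∀ z ∈ S, (B z).IsSymm)
    (hg0 : ∀ z ∈ S, 0 ≤ g z) (hpos : ∀ z ∈ S, g z = 0 → (B z).PosDef) :
    ∃ k : ℕ, ∀ z ∈ S, (B z + (k * g z) • (1 : Matrix κ κ ℝ)).PosDef := by
  cases nonempty_fintype κ
  have hsq : ∀ v : κ → ℝ, 0 ≤ v ⬝ᵥ v := fun v ↦ sum_nonneg fun i _ ↦ mul_self_nonneg (v i)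
  have hzero : ∀ p ∈ S ×ˢ Metric.sphere (0 : κ → ℝ) 1, g p.1 * (p.2 ⬝ᵥ p.2) = 0 →
      0 < p.2 ⬝ᵥ B p.1 *ᵥ p.2 := by
    rintro ⟨z, v⟩ ⟨hz, hv⟩ h
    have hv0 : v ≠ 0 := Metric.ne_of_mem_sphere hv one_ne_zero
    have hgz : g z = 0 := (mul_eq_zero.1 h).resolve_right (dotProduct_self_eq_zero.not.2 hv0)
    simpa using (hpos z hz hgz).dotProduct_mulVec_pos hv0
  obtain ⟨k, hk⟩ := exists_nat_forall_pos_add_mul (hS.prod (isCompact_sphere (0 : κ → ℝ) 1))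
    (f := fun p ↦ p.2 ⬝ᵥ B p.1 *ᵥ p.2) (g := fun p ↦ g p.1 * (p.2 ⬝ᵥ p.2))
    (by fun_prop) (by fun_prop) (fun p hp ↦ mul_nonneg (hg0 p.1 hp.1) (hsq p.2)) hzero
  refine ⟨k, fun z hz ↦ posDef_of_forall_mem_sphere ?_ fun v hv ↦ ?_⟩
  · exact (hsymm z hz).add (Matrix.isSymm_one.smul _)
  · have := hk (z, v) ⟨hz, hv⟩
    simpa [Matrix.add_mulVec, Matrix.smul_mulVec, dotProduct_add, dotProduct_smul, mul_assoc]
      using this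

end Compactness

section MultinomialExpansion

theorem multinomial_add_mul_prod_descFactorial {ι : Type*} (s : Finset ι) (γ β : ι → ℕ) :
    Nat.multinomial s (γ + β) * ∏ i ∈ s, ((γ + β) i).descFactorial (β i) =
      Nat.multinomial s γ * (∑ i ∈ s, (γ + β) i).descFactorial (∑ i ∈ s, β i) := by
  have hβ : ∑ i ∈ s, β i ≤ ∑ i ∈ s, (γ + β) i := sum_le_sum fun i _ ↦ Nat.le_add_left _ _
  have hγ : ∑ i ∈ s, (γ + β) i - ∑ i ∈ s, β i = ∑ i ∈ s, γ i := by simp [sum_add_distrib]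
  have hfact : (∏ i ∈ s, (γ i).factorial) * ∏ i ∈ s, ((γ + β) i).descFactorial (β i) =
      ∏ i ∈ s, ((γ + β) i).factorial := by
    rw [← prod_mul_distrib]
    refine prod_congr rfl fun i _ ↦ ?_
    simpa using Nat.factorial_mul_descFactorial (Nat.le_add_left (β i) (γ i))
  have hpos : 0 < ∏ i ∈ s, (γ i).factorial := prod_pos fun i _ ↦ Nat.factorial_pos (γ i)
  refine Nat.eq_of_mul_eq_mul_left hpos ?_
  calc (∏ i ∈ s, (γ i).factorial) *
        (Nat.multinomial s (γ + β) * ∏ i ∈ s, ((γ + β) i).descFactorial (β i))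
      = (∏ i ∈ s, ((γ + β) i).factorial) * Nat.multinomial s (γ + β) := by rw [← hfact]; ring
    _ = (∑ i ∈ s, (γ + β) i).factorial := Nat.multinomial_spec _ _
    _ = (∑ i ∈ s, γ i).factorial * (∑ i ∈ s, (γ + β) i).descFactorial (∑ i ∈ s, β i) := by
      rw [← Nat.factorial_mul_descFactorial hβ, hγ]
    _ = (∏ i ∈ s, (γ i).factorial) *
        (Nat.multinomial s γ * (∑ i ∈ s, (γ + β) i).descFactorial (∑ i ∈ s, β i)) := by
      rw [← Nat.multinomial_spec, mul_assoc]

variable {ι : Type*} [Fintype ι] [DecidableEq ι] {A : Type*}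

-- This is the multinomial theorem differentiated `β i` times in each variable `ℓ i`.
theorem descFactorial_mul_prod_pow_mul_sum_pow [CommSemiring A] (ℓ : ι → A) (β : ι → ℕ) (n : ℕ) :
    ((n + ∑ i, β i).descFactorial (∑ i, β i) : A) * ((∏ i, ℓ i ^ β i) * (∑ i, ℓ i) ^ n) =
      ∑ α ∈ piAntidiag univ (n + ∑ i, β i),
        (Nat.multinomial univ α * ∏ i, (α i).descFactorial (β i) : ℕ) * ∏ i, ℓ i ^ α i := by
  have hsub : (piAntidiag univ n).map (addRightEmbedding β) ⊆
      piAntidiag univ (n + ∑ i, β i) := by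
    intro α hα
    obtain ⟨γ, hγ, rfl⟩ := mem_map.1 hα
    simpa [sum_add_distrib] using hγ
  have hvanish : ∀ α ∈ piAntidiag univ (n + ∑ i, β i),
      α ∉ (piAntidiag univ n).map (addRightEmbedding β) →
      ((Nat.multinomial univ α * ∏ i, (α i).descFactorial (β i) : ℕ) : A) * ∏ i, ℓ i ^ α i =
        0 := by
    intro α hα hα'
    obtain ⟨i, hi⟩ : ∃ i, α i < β i := by
      by_contra! hle
      have hadd : α - β + β = α := tsub_add_cancel_of_le hle
      have hsum : ∑ i, (α - β + β) i = n + ∑ i, β i := by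
        rw [hadd]; exact (mem_piAntidiag.1 hα).1
      refine hα' (mem_map.2 ⟨α - β, ?_, hadd⟩)
      simpa [sum_add_distrib] using hsum
    have hzero : ∏ i, (α i).descFactorial (β i) = 0 :=
      prod_eq_zero (mem_univ i) (Nat.descFactorial_of_lt hi)
    simp only [hzero, mul_zero, Nat.cast_zero, zero_mul]
  rw [← sum_subset hsub hvanish, sum_map, sum_pow_eq_sum_piAntidiag, mul_sum, mul_sum]
  refine sum_congr rfl fun γ hγ ↦ ?_
  have hγ' : ∑ i, (γ + β) i = n + ∑ i, β i := by
    simp [sum_add_distrib, (mem_piAntidiag.1 hγ).1]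
  rw [addRightEmbedding_apply, multinomial_add_mul_prod_descFactorial, hγ']
  simp only [Pi.add_apply, pow_add, prod_mul_distrib]
  push_cast
  ring

end MultinomialExpansion

section BernsteinCoefficients

variable {𝕜 : Type*} [Field 𝕜]

/-- The falling factorial `x (x - h) ⋯ (x - (k - 1) h)` of length `k` and step `h`; it deforms the
power `x ^ k`, which is the case `h = 0`. -/
def fallingFactorial {R : Type*} [CommRing R] (h x : R) (k : ℕ) : R := ∏ r ∈ range k, (x - r * h)

theorem fallingFactorial_zero_step {R : Type*} [CommRing R] (x : R) (k : ℕ) :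
    fallingFactorial 0 x k = x ^ k := by
  simp [fallingFactorial]

theorem fallingFactorial_inv_div [CharZero 𝕜] {N : ℕ} (hN : N ≠ 0) (a k : ℕ) :
    fallingFactorial (N : 𝕜)⁻¹ (a / N) k = a.descFactorial k / (N : 𝕜) ^ k := by
  have hN' : (N : 𝕜) ≠ 0 := Nat.cast_ne_zero.2 hN
  rw [fallingFactorial, ← descPochhammer_eval_eq_descFactorial, descPochhammer_eval_eq_prod_range,
    eq_div_iff (pow_ne_zero _ hN'), ← Finset.card_range k, ← prod_const, card_range,
    ← prod_mul_distrib]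
  refine prod_congr rfl fun r _ ↦ ?_
  field_simp

theorem continuous_fallingFactorial {R : Type*} [CommRing R] [TopologicalSpace R]
    [IsTopologicalRing R] (k : ℕ) :
    Continuous fun z : R × R ↦ fallingFactorial z.1 z.2 k := by
  unfold fallingFactorial
  fun_prop

variable {ι : Type*} [Fintype ι]

/-- For `h = 1 / N` and `x = α / N`, where `|α| = N`, this is the coefficient of `q` at the
Bernstein polynomial `multinomial α • ∏ i, X i ^ α i` of degree `N` on the simplex `∑ i, X i = 1`.
Step and point are independent arguments, so that the limit `N → ∞` becomes continuity at `h = 0`,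
where the value is `eval x q`. -/
noncomputable def bernsteinCoeff (h : 𝕜) (x : ι → 𝕜) (q : MvPolynomial ι 𝕜) : 𝕜 :=
  ∑ β ∈ q.support,
    q.coeff β * ((∏ i, fallingFactorial h (x i) (β i)) / fallingFactorial h 1 (∑ i, β i))

theorem bernsteinCoeff_zero_step (x : ι → 𝕜) (q : MvPolynomial ι 𝕜) :
    bernsteinCoeff 0 x q = eval x q := by
  simp [bernsteinCoeff, fallingFactorial_zero_step, eval_eq']

theorem continuousAt_bernsteinCoeff [TopologicalSpace 𝕜] [IsTopologicalDivisionRing 𝕜]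
    (x : ι → 𝕜) (q : MvPolynomial ι 𝕜) :
    ContinuousAt (fun z : 𝕜 × (ι → 𝕜) ↦ bernsteinCoeff z.1 z.2 q) (0, x) := by
  have hcont : ∀ k, Continuous fun z : 𝕜 × 𝕜 ↦ fallingFactorial z.1 z.2 k :=
    continuous_fallingFactorial
  refine tendsto_finsetSum _ fun β _ ↦ (ContinuousAt.div ?_ ?_ ?_).const_mul _
  · exact (continuous_finsetProd _ fun i _ ↦
      (hcont (β i)).comp (by fun_prop : Continuous fun z : 𝕜 × (ι → 𝕜) ↦ (z.1, z.2 i))).continuousAt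
  · exact ((hcont _).comp
      (by fun_prop : Continuous fun z : 𝕜 × (ι → 𝕜) ↦ (z.1, (1 : 𝕜)))).continuousAt
  · simp [fallingFactorial_zero_step]

variable [CharZero 𝕜]

theorem prod_fallingFactorial_div_eq_prod_descFactorial_div {N : ℕ} (hN : N ≠ 0) (α β : ι → ℕ) :
    (∏ i, fallingFactorial (N : 𝕜)⁻¹ (α i / N) (β i)) / fallingFactorial (N : 𝕜)⁻¹ 1 (∑ i, β i) =
      (∏ i, ((α i).descFactorial (β i) : 𝕜)) / N.descFactorial (∑ i, β i) := by
  have hN' : (N : 𝕜) ≠ 0 := Nat.cast_ne_zero.2 hN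
  have hone : fallingFactorial (N : 𝕜)⁻¹ 1 (∑ i, β i) =
      N.descFactorial (∑ i, β i) / (N : 𝕜) ^ ∑ i, β i := by
    rw [← fallingFactorial_inv_div hN, div_self hN']
  simp only [hone, fallingFactorial_inv_div hN, prod_div_distrib, prod_pow_eq_pow_sum]
  exact div_div_div_cancel_right₀ (pow_ne_zero _ hN') _ _

theorem eventually_forall_posDef_map_bernsteinCoeff {κ : Type*} [Finite κ]
    {S : Set (ι → ℝ)} (hS : IsCompact S)
    {P : Matrix κ κ (MvPolynomial ι ℝ)} (hP : P.IsSymm)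
    (hpos : ∀ y ∈ S, (P.map (eval y)).PosDef) :
    ∀ᶠ N : ℕ in atTop, ∀ y ∈ S, (P.map (bernsteinCoeff (N : ℝ)⁻¹ y)).PosDef := by
  refine tendsto_inv_atTop_nhds_zero_nat.eventually
    (eventually_forall_posDef (B := fun h y ↦ P.map (bernsteinCoeff h y)) hS ?_ ?_ ?_)
  · exact fun y _ ↦ continuousAt_pi.2 fun i ↦ continuousAt_pi.2 fun j ↦
      continuousAt_bernsteinCoeff y (P i j)
  · exact fun h y _ ↦ hP.map _
  · intro y hy
    have hzero : P.map (bernsteinCoeff 0 y) = P.map (eval y) :=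
      Matrix.ext fun i j ↦ bernsteinCoeff_zero_step y (P i j)
    exact hzero ▸ hpos y hy

variable [DecidableEq ι] {A : Type*} [CommRing A] [Algebra 𝕜 A]

theorem prod_pow_eq_sum_piAntidiag {ℓ : ι → A} (hℓ : ∑ i, ℓ i = 1) (β : ι → ℕ) {N : ℕ}
    (hβ : ∑ i, β i ≤ N) :
    ∏ i, ℓ i ^ β i = ∑ α ∈ piAntidiag univ N,
      (Nat.multinomial univ α * ((∏ i, ((α i).descFactorial (β i) : 𝕜)) /
        N.descFactorial (∑ i, β i))) • ∏ i, ℓ i ^ α i := by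
  obtain ⟨n, rfl⟩ := Nat.exists_eq_add_of_le' hβ
  set D : 𝕜 := ((n + ∑ i, β i).descFactorial (∑ i, β i) : 𝕜) with hD
  have hD0 : D ≠ 0 := by simp [hD, Nat.descFactorial_eq_zero_iff_lt]
  have hdiff := descFactorial_mul_prod_pow_mul_sum_pow ℓ β n
  rw [hℓ, one_pow, mul_one] at hdiff
  rw [← inv_smul_smul₀ hD0 (∏ i, ℓ i ^ β i), hD, Nat.cast_smul_eq_nsmul, nsmul_eq_mul, hdiff,
    smul_sum]
  refine sum_congr rfl fun α _ ↦ ?_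
  rw [← nsmul_eq_mul, ← Nat.cast_smul_eq_nsmul 𝕜, smul_smul]
  congr 1
  push_cast
  ring

theorem aeval_eq_sum_bernsteinCoeff {ℓ : ι → A} (hℓ : ∑ i, ℓ i = 1) (q : MvPolynomial ι 𝕜)
    {N : ℕ} (hN : N ≠ 0) (hq : q.totalDegree ≤ N) :
    aeval ℓ q = ∑ α ∈ piAntidiag univ N,
      (Nat.multinomial univ α * bernsteinCoeff (N : 𝕜)⁻¹ (fun i ↦ α i / N) q) •
        ∏ i, ℓ i ^ α i := by
  have hdeg : ∀ β ∈ q.support, ∑ i, β i ≤ N := fun β hβ ↦ by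
    simpa [Finsupp.sum_fintype] using (le_totalDegree hβ).trans hq
  calc aeval ℓ q = ∑ β ∈ q.support, q.coeff β • ∏ i, ℓ i ^ β i := by
        rw [aeval_def, eval₂_eq']
        simp only [Algebra.smul_def]
    _ = ∑ β ∈ q.support, q.coeff β • ∑ α ∈ piAntidiag univ N,
        (Nat.multinomial univ α * ((∏ i, ((α i).descFactorial (β i) : 𝕜)) /
          N.descFactorial (∑ i, β i))) • ∏ i, ℓ i ^ α i :=
        sum_congr rfl fun β hβ ↦ by rw [← prod_pow_eq_sum_piAntidiag hℓ β (hdeg β hβ)]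
    _ = _ := by
        simp only [bernsteinCoeff, prod_fallingFactorial_div_eq_prod_descFactorial_div hN, smul_sum,
          mul_sum, sum_smul]
        rw [sum_comm]
        refine sum_congr rfl fun α _ ↦ sum_congr rfl fun β _ ↦ ?_
        rw [smul_smul, mul_left_comm]

end BernsteinCoefficients

section Lifting

theorem exists_mem_ideal_eval_nonneg_and_forall_eval_eq_zero {ι R : Type*} [Finite ι]
    [Field R] [LinearOrder R] [IsStrictOrderedRing R] (I : Ideal (MvPolynomial ι R)) :
    ∃ r ∈ I, ∀ y, 0 ≤ eval y r ∧ (eval y r = 0 → ∀ p ∈ I, eval y p = 0) := by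
  obtain ⟨T, rfl⟩ := (isNoetherianRing_iff_ideal_fg _).1 inferInstance I
  have heval : ∀ y, eval y (∑ g ∈ T, g ^ 2) = ∑ g ∈ T, eval y g ^ 2 := by simp
  refine ⟨∑ g ∈ T, g ^ 2, sum_mem fun g hg ↦
    Ideal.pow_mem_of_mem _ (Ideal.subset_span hg) 2 two_pos, fun y ↦ ⟨?_, fun hy ↦ ?_⟩⟩
  · rw [heval]
    exact sum_nonneg fun g _ ↦ sq_nonneg _
  · rw [heval, sum_eq_zero_iff_of_nonneg fun g _ ↦ sq_nonneg _] at hy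
    have hle : Ideal.span (T : Set (MvPolynomial ι R)) ≤ RingHom.ker (eval y) :=
      Ideal.span_le.2 fun g hg ↦ pow_eq_zero_iff two_ne_zero |>.1 (hy g hg)
    exact fun p hp ↦ hle hp

theorem exists_algHom_apply_aeval_eq_eval {ι R A : Type*} [CommRing R] [CommRing A]
    [Algebra R A] {ℓ : ι → A}
    (hℓ : Function.Surjective (aeval ℓ : MvPolynomial ι R →ₐ[R] A)) {y : ι → R}
    (hy : ∀ p ∈ RingHom.ker (aeval ℓ : MvPolynomial ι R →ₐ[R] A), eval y p = 0) :
    ∃ φ : A →ₐ[R] R, ∀ p, φ (aeval ℓ p) = eval y p :=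
  ⟨AlgHom.liftOfSurjective (aeval ℓ) hℓ (aeval y) fun p hp ↦ by
    simpa [aeval_eq_eval] using hy p hp, fun p ↦ by
    simp [AlgHom.liftOfSurjective_apply, aeval_eq_eval]⟩

theorem exists_isSymm_map_aeval_eq_and_forall_posDef {ι κ A : Type*} [Finite ι]
    [Finite κ] [CommRing A] [Algebra ℝ A] {ℓ : ι → A}
    (hgen : Algebra.adjoin ℝ (Set.range ℓ) = ⊤) {F : Matrix κ κ A} (hF : F.IsSymm)
    {S : Set (ι → ℝ)} (hS : IsCompact S)
    (hpos : ∀ φ : A →ₐ[ℝ] ℝ, (fun i ↦ φ (ℓ i)) ∈ S → (F.map φ).PosDef) :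
    ∃ P : Matrix κ κ (MvPolynomial ι ℝ), P.IsSymm ∧ P.map (aeval ℓ) = F ∧
      ∀ y ∈ S, (P.map (eval y)).PosDef := by
  classical
  have hsurj : Function.Surjective (aeval ℓ : MvPolynomial ι ℝ →ₐ[ℝ] A) := by
    rw [← AlgHom.range_eq_top, ← Algebra.adjoin_range_eq_range_aeval, hgen]
  have hinv := Function.surjInv_eq hsurj
  obtain ⟨r, hr, hr_nonneg⟩ := exists_mem_ideal_eval_nonneg_and_forall_eval_eq_zero
    (RingHom.ker (aeval ℓ : MvPolynomial ι ℝ →ₐ[ℝ] A))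
  let P := F.map (Function.surjInv hsurj)
  have hP : P.IsSymm := hF.map _
  have hzero : ∀ y ∈ S, eval y r = 0 → (P.map (eval y)).PosDef := by
    intro y hy hy0
    obtain ⟨φ, hφ⟩ := exists_algHom_apply_aeval_eq_eval hsurj ((hr_nonneg y).2 hy0)
    have hFφ : F.map φ = P.map (eval y) := by
      ext i j
      simp only [P, Matrix.map_apply, ← hφ, hinv]
    rw [← hFφ]
    refine hpos φ ?_
    convert hy using 2 with i
    simpa using hφ (X i)
  obtain ⟨k, hk⟩ := exists_nat_forall_posDef_add_smul_one hS
    (B := fun y ↦ P.map (eval y)) (g := fun y ↦ eval y r)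
    (continuous_matrix fun i j ↦ continuous_eval (P i j)) (continuous_eval r)
    (fun y _ ↦ hP.map _) (fun y _ ↦ (hr_nonneg y).1) hzero
  refine ⟨P + (k * r) • 1, hP.add (Matrix.isSymm_one.smul _), ?_, fun y hy ↦ ?_⟩
  · have hr0 : aeval ℓ r = 0 := hr
    ext i j
    simp [P, hinv, hr0]
  · convert hk y hy using 1
    ext i j
    by_cases hij : i = j <;> simp [hij]

end Lifting

section PosDefExpansion

theorem adjoin_range_smul_eq_top {ι R A : Type*} [Field R] [Semiring A] [Algebra R A]
    {c : ι → R} (hc : ∀ i, c i ≠ 0) {ℓ : ι → A} (hgen : Algebra.adjoin R (Set.range ℓ) = ⊤) :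
    Algebra.adjoin R (Set.range fun i ↦ c i • ℓ i) = ⊤ := by
  rw [eq_top_iff, ← hgen, Algebra.adjoin_le_iff]
  rintro _ ⟨i, rfl⟩
  rw [← inv_smul_smul₀ (hc i) (ℓ i)]
  exact Subalgebra.smul_mem _ (Algebra.subset_adjoin (Set.mem_range_self i)) _

variable {ι κ A : Type*} [Fintype ι] [DecidableEq ι] [CommRing A] [Algebra ℝ A]

/-- `F` is a combination of the monomials of degree `N` in the family `ℓ` with positive definite
real coefficient matrices. -/
def HasPosDefExpansion (ℓ : ι → A) (N : ℕ) (F : Matrix κ κ A) : Prop :=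
  ∃ G : (ι → ℕ) → Matrix κ κ ℝ, (∀ α ∈ piAntidiag univ N, (G α).PosDef) ∧
    F = ∑ α ∈ piAntidiag univ N, (∏ i, ℓ i ^ α i) • (G α).map (algebraMap ℝ A)

theorem HasPosDefExpansion.of_smul {c : ι → ℝ} (hc : ∀ i, 0 < c i) {ℓ : ι → A} {N : ℕ}
    {F : Matrix κ κ A} (h : HasPosDefExpansion (fun i ↦ c i • ℓ i) N F) :
    HasPosDefExpansion ℓ N F := by
  obtain ⟨G, hG, hF⟩ := h
  refine ⟨fun α ↦ (∏ i, c i ^ α i) • G α,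
    fun α hα ↦ (hG α hα).smul (prod_pos fun i _ ↦ pow_pos (hc i) _), ?_⟩
  rw [hF]
  refine sum_congr rfl fun α _ ↦ ?_
  simp only [smul_pow, prod_smul]
  ext j k
  simp only [Matrix.smul_apply, Matrix.map_apply, smul_eq_mul, map_mul, Algebra.smul_def]
  ring

theorem natCast_div_mem_stdSimplex {N : ℕ} (hN : N ≠ 0) {α : ι → ℕ}
    (hα : α ∈ piAntidiag univ N) : (fun i ↦ (α i / N : ℝ)) ∈ stdSimplex ℝ ι := by
  refine ⟨fun i ↦ by positivity, ?_⟩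
  rw [← sum_div, ← Nat.cast_sum, (mem_piAntidiag.1 hα).1, div_self (Nat.cast_ne_zero.2 hN)]

variable [Finite κ]

theorem eventually_hasPosDefExpansion_map_aeval {ℓ : ι → A} (hℓ : ∑ i, ℓ i = 1)
    {P : Matrix κ κ (MvPolynomial ι ℝ)} (hP : P.IsSymm)
    (hpos : ∀ y ∈ stdSimplex ℝ ι, (P.map (eval y)).PosDef) :
    ∀ᶠ N in atTop, HasPosDefExpansion ℓ N (P.map (aeval ℓ)) := by
  have hdeg : ∀ᶠ N in atTop, ∀ i j, (P i j).totalDegree ≤ N :=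
    eventually_all.2 fun i ↦ eventually_all.2 fun j ↦ eventually_ge_atTop _
  filter_upwards [eventually_forall_posDef_map_bernsteinCoeff (isCompact_stdSimplex ℝ ι) hP hpos,
    hdeg, eventually_ne_atTop 0] with N hB hdeg hN
  refine ⟨fun α ↦ (Nat.multinomial univ α : ℝ) •
    P.map (bernsteinCoeff (N : ℝ)⁻¹ fun i ↦ α i / N), fun α hα ↦ ?_, ?_⟩
  · exact (hB _ (natCast_div_mem_stdSimplex hN hα)).smul (Nat.cast_pos.2 (Nat.multinomial_pos _ _))
  · ext i j
    rw [Matrix.map_apply, aeval_eq_sum_bernsteinCoeff hℓ _ hN (hdeg i j), Matrix.sum_apply]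
    simp only [Matrix.smul_apply, Matrix.map_apply, smul_eq_mul, Algebra.smul_def, mul_comm]

theorem eventually_hasPosDefExpansion_of_sum_eq_one {ℓ : ι → A} (hℓ : ∑ i, ℓ i = 1)
    (hgen : Algebra.adjoin ℝ (Set.range ℓ) = ⊤) {F : Matrix κ κ A} (hF : F.IsSymm)
    (hpos : ∀ φ : A →ₐ[ℝ] ℝ, (∀ i, 0 ≤ φ (ℓ i)) → (F.map φ).PosDef) :
    ∀ᶠ N in atTop, HasPosDefExpansion ℓ N F := by
  obtain ⟨P, hP, rfl, hPpos⟩ := exists_isSymm_map_aeval_eq_and_forall_posDef hgen hF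
    (isCompact_stdSimplex ℝ ι) fun φ hφ ↦ hpos φ hφ.1
  exact eventually_hasPosDefExpansion_map_aeval hℓ hP hPpos

theorem eventually_hasPosDefExpansion {ℓ : ι → A} {c : ι → ℝ} (hc : ∀ i, 0 < c i)
    (hsum : ∑ i, c i • ℓ i = 1) (hgen : Algebra.adjoin ℝ (Set.range ℓ) = ⊤) {F : Matrix κ κ A}
    (hF : F.IsSymm) (hpos : ∀ φ : A →ₐ[ℝ] ℝ, (∀ i, 0 ≤ φ (ℓ i)) → (F.map φ).PosDef) :
    ∀ᶠ N in atTop, HasPosDefExpansion ℓ N F := by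
  refine (eventually_hasPosDefExpansion_of_sum_eq_one hsum
    (adjoin_range_smul_eq_top (fun i ↦ (hc i).ne') hgen) hF fun φ hφ ↦ hpos φ fun i ↦ ?_).mono
    fun N hN ↦ hN.of_smul hc
  exact nonneg_of_mul_nonneg_right (by simpa using hφ i) (hc i)

end PosDefExpansion

section Stiemke

theorem span_eq_top_of_forall_nonneg_imp_eq_zero {𝕜 V : Type*} [Field 𝕜] [Preorder 𝕜]
    [AddCommGroup V] [Module 𝕜 V] {s : Set V}
    (hs : ∀ f : V →ₗ[𝕜] 𝕜, (∀ v ∈ s, 0 ≤ f v) → f = 0) :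
    Submodule.span 𝕜 s = ⊤ := by
  by_contra hne
  obtain ⟨f, hf, hle⟩ := Submodule.exists_le_ker_of_lt_top _ (lt_top_iff_ne_top.2 hne)
  exact hf (hs f fun v hv ↦ (hle (Submodule.subset_span hv) : f v = 0).ge)

theorem exists_pos_sum_smul_eq_zero {ι V : Type*} [Fintype ι] [NormedAddCommGroup V]
    [NormedSpace ℝ V] [FiniteDimensional ℝ V] {a : ι → V}
    (ha : ∀ f : V →ₗ[ℝ] ℝ, (∀ i, 0 ≤ f (a i)) → f = 0) :
    ∃ c : ι → ℝ, (∀ i, 0 < c i) ∧ ∑ i, c i • a i = 0 := by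
  classical
  let T : (ι → ℝ) →ₗ[ℝ] V := Fintype.linearCombination ℝ a
  have hT : Function.Surjective T := by
    rw [← LinearMap.range_eq_top, Fintype.range_linearCombination]
    exact span_eq_top_of_forall_nonneg_imp_eq_zero (by simpa using ha)
  let P : Set (ι → ℝ) := Set.univ.pi fun _ ↦ Set.Ioi 0
  have hPopen : IsOpen (T '' P) :=
    T.isOpenMap_of_finiteDimensional hT _ (isOpen_set_pi Set.finite_univ fun _ _ ↦ isOpen_Ioi)
  have hPconv : Convex ℝ (T '' P) := (convex_pi fun _ _ ↦ convex_Ioi 0).linear_image T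
  by_contra hno
  have h0 : (0 : V) ∉ T '' P := by
    rintro ⟨c, hc, hTc⟩
    exact hno ⟨c, fun i ↦ hc i trivial, hTc⟩
  obtain ⟨f, hf⟩ := geometric_hahn_banach_open_point hPconv hPopen h0
  have hneg : ∀ c ∈ P, f (T c) < 0 := fun c hc ↦ by simpa using hf _ ⟨c, hc, rfl⟩
  have hnonpos : ∀ i, f (a i) ≤ 0 := by
    intro i
    have hsingle : (0 : ι → ℝ) ≤ Pi.single i 1 := Pi.single_nonneg.2 zero_le_one
    have hmem : Pi.single i 1 ∈ closure P := by
      simp only [P, closure_pi_set, closure_Ioi, Set.mem_univ_pi, Set.mem_Ici]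
      exact hsingle
    have hcont : Continuous fun c ↦ f (T c) := f.continuous.comp T.continuous_of_finiteDimensional
    have hle : f (T (Pi.single i 1)) ≤ 0 :=
      closure_minimal (t := {c | f (T c) ≤ 0}) (fun c hc ↦ (hneg c hc).le)
        (isClosed_le hcont continuous_const) hmem
    simpa [T] using hle
  have hzero : -(f : V →ₗ[ℝ] ℝ) = 0 := ha _ fun i ↦ by simpa using hnonpos i
  have hone : (fun _ ↦ 1 : ι → ℝ) ∈ P := fun i _ ↦ one_pos (α := ℝ)
  have hfT : f (T fun _ ↦ 1) = 0 := by simpa using LinearMap.congr_fun hzero (T fun _ ↦ 1)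
  exact (hneg _ hone).ne hfT

end Stiemke

section Polytope

theorem eq_zero_of_forall_add_smul_mem {E : Type*} [NormedAddCommGroup E] [NormedSpace ℝ E]
    {S : Set E} (hS : Bornology.IsBounded S) {x v : E} (h : ∀ r : ℝ, 0 ≤ r → x + r • v ∈ S) :
    v = 0 := by
  obtain ⟨B, hB⟩ := hS.exists_norm_le
  by_contra hv
  have hv' : 0 < ‖v‖ := norm_pos_iff.2 hv
  have hB0 : 0 ≤ B := (norm_nonneg _).trans (hB _ (h 0 le_rfl))
  have hr : 0 ≤ (B + ‖x‖ + 1) / ‖v‖ := by positivity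
  have hle : B + ‖x‖ + 1 ≤ B + ‖x‖ :=
    calc B + ‖x‖ + 1 = ‖((B + ‖x‖ + 1) / ‖v‖) • v‖ := by
          rw [norm_smul, Real.norm_of_nonneg hr, div_mul_cancel₀ _ hv'.ne']
      _ ≤ ‖x + ((B + ‖x‖ + 1) / ‖v‖) • v‖ + ‖x‖ := by
          simpa [add_comm] using norm_sub_le (x + ((B + ‖x‖ + 1) / ‖v‖) • v) x
      _ ≤ B + ‖x‖ := by gcongr; exact hB _ (h _ hr)
  linarith

/-- The coefficient vector of the homogeneous part of degree one of `p`. -/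
noncomputable def linearPart {σ R : Type*} [CommSemiring R] (p : MvPolynomial σ R) (j : σ) : R :=
  p.coeff (Finsupp.single j 1)

variable {σ ι : Type*}

theorem eq_C_add_linearCombination_linearPart {R : Type*} [Fintype σ] [CommSemiring R]
    {p : MvPolynomial σ R} (hp : p.totalDegree ≤ 1) :
    p = C (p.coeff 0) + Fintype.linearCombination R X (linearPart p) := by
  classical
  have hdecomp : p = C (p.coeff 0) + homogeneousComponent 1 p := by
    conv_lhs => rw [← sum_homogeneousComponent p]
    rw [sum_subset (range_mono (Nat.succ_le_succ hp)) fun k _ hk ↦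
      homogeneousComponent_eq_zero _ _ (by simpa using hk), sum_range_succ, sum_range_one,
      homogeneousComponent_zero]
  have hspan : homogeneousComponent 1 p ∈ Submodule.span R (Set.range X) := by
    rw [← homogeneousSubmodule_one_eq_span_X]
    exact homogeneousComponent_mem 1 p
  rw [← Fintype.range_linearCombination] at hspan
  obtain ⟨a, ha⟩ := hspan
  have hpart : linearPart p = a := by
    funext j
    rw [linearPart, hdecomp, ← ha]
    simp [Fintype.linearCombination_apply, coeff_sum, coeff_C, coeff_X,
      Finsupp.single_left_inj one_ne_zero, eq_comm (a := (0 : σ →₀ ℕ))]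
  rw [hpart, ha, ← hdecomp]

theorem eval_eq_coeff_zero_add_dotProduct_linearPart {R : Type*} [Fintype σ]
    [CommSemiring R] {p : MvPolynomial σ R} (hp : p.totalDegree ≤ 1) (x : σ → R) :
    eval x p = p.coeff 0 + x ⬝ᵥ linearPart p := by
  conv_lhs => rw [eq_C_add_linearCombination_linearPart hp]
  simp [Fintype.linearCombination_apply, dotProduct, smul_eval, mul_comm]

variable [Finite σ] {L : ι → MvPolynomial σ ℝ} (hL : ∀ i, (L i).totalDegree ≤ 1)
  (hne : {x | ∀ i, 0 ≤ eval x (L i)}.Nonempty)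
  (hbdd : Bornology.IsBounded {x | ∀ i, 0 ≤ eval x (L i)})

include hL hne hbdd

theorem linearMap_eq_zero_of_forall_nonneg_linearPart (f : (σ → ℝ) →ₗ[ℝ] ℝ)
    (hf : ∀ i, 0 ≤ f (linearPart (L i))) : f = 0 := by
  cases nonempty_fintype σ
  classical
  obtain ⟨v, rfl⟩ := (dotProductEquiv ℝ σ).surjective f
  obtain ⟨x, hx⟩ := hne
  have heval := fun i ↦ eval_eq_coeff_zero_add_dotProduct_linearPart (hL i)
  suffices hv : v = 0 by rw [hv, map_zero]
  refine eq_zero_of_forall_add_smul_mem hbdd (x := x) fun r hr i ↦ ?_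
  have hvi : 0 ≤ v ⬝ᵥ linearPart (L i) := by simpa using hf i
  calc 0 ≤ eval x (L i) + r * (v ⬝ᵥ linearPart (L i)) := add_nonneg (hx i) (mul_nonneg hr hvi)
    _ = eval (x + r • v) (L i) := by
      rw [heval, heval, add_dotProduct, smul_dotProduct, smul_eq_mul, add_assoc]

theorem exists_pos_sum_smul_eq_C_of_isBounded [Fintype ι] :
    ∃ c : ι → ℝ, (∀ i, 0 < c i) ∧ ∃ s : ℝ, 0 ≤ s ∧ ∑ i, c i • L i = C s := by
  cases nonempty_fintype σ
  obtain ⟨c, hc, hc0⟩ :=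
    exists_pos_sum_smul_eq_zero (linearMap_eq_zero_of_forall_nonneg_linearPart hL hne hbdd)
  have hsum : ∑ i, c i • L i = C (∑ i, c i * (L i).coeff 0) :=
    calc ∑ i, c i • L i
        = ∑ i, C (c i * (L i).coeff 0) +
            Fintype.linearCombination ℝ X (∑ i, c i • linearPart (L i)) := by
          rw [map_sum, ← sum_add_distrib]
          refine sum_congr rfl fun i _ ↦ ?_
          conv_lhs => rw [eq_C_add_linearCombination_linearPart (hL i)]
          rw [smul_add, smul_eq_C_mul, ← C_mul, ← map_smul]
      _ = C (∑ i, c i * (L i).coeff 0) := by rw [hc0, map_zero, add_zero, map_sum]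
  refine ⟨c, hc, _, ?_, hsum⟩
  obtain ⟨x, hx⟩ := hne
  rw [← eval_C (f := x) (∑ i, c i * (L i).coeff 0), ← hsum, map_sum]
  refine sum_nonneg fun i _ ↦ ?_
  rw [smul_eval]
  exact mul_nonneg (hc i).le (hx i)

theorem adjoin_range_eq_top_of_isBounded : Algebra.adjoin ℝ (Set.range L) = ⊤ := by
  cases nonempty_fintype σ
  classical
  have hspan : Submodule.span ℝ (Set.range fun i ↦ linearPart (L i)) = ⊤ :=
    span_eq_top_of_forall_nonneg_imp_eq_zero
      (by simpa using linearMap_eq_zero_of_forall_nonneg_linearPart hL hne hbdd)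
  have hle : Submodule.span ℝ (Set.range fun i ↦ linearPart (L i)) ≤
      (Subalgebra.toSubmodule (Algebra.adjoin ℝ (Set.range L))).comap
        (Fintype.linearCombination ℝ X) := by
    rw [Submodule.span_le]
    rintro _ ⟨i, rfl⟩
    have hsub : Fintype.linearCombination ℝ X (linearPart (L i)) = L i - C ((L i).coeff 0) :=
      eq_sub_of_add_eq' (eq_C_add_linearCombination_linearPart (hL i)).symm
    change Fintype.linearCombination ℝ X (linearPart (L i)) ∈ Algebra.adjoin ℝ (Set.range L)
    rw [hsub]
    exact sub_mem (Algebra.subset_adjoin ⟨i, rfl⟩) (Subalgebra.algebraMap_mem _ _)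
  rw [eq_top_iff, ← adjoin_range_X, Algebra.adjoin_le_iff]
  rintro _ ⟨j, rfl⟩
  have hj := hle (hspan ▸ Submodule.mem_top : Pi.single j 1 ∈ _)
  simpa using hj

end Polytope

section Handelman

theorem sum_piAntidiag_option {ι M : Type*} [Fintype ι] [DecidableEq ι] [AddCommMonoid M] (N : ℕ)
    (f : (Option ι → ℕ) → M) :
    ∑ α ∈ piAntidiag univ N, f α =
      ∑ β ∈ (Iic fun _ : ι ↦ N).filter (fun β ↦ ∑ i, β i ≤ N),
        f fun o ↦ o.elim (N - ∑ i, β i) β := by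
  have hcons : ∀ α ∈ piAntidiag univ N,
      (fun o : Option ι ↦ o.elim (N - ∑ i, α (some i)) fun i ↦ α (some i)) = α := by
    intro α hα
    have hsum : α none + ∑ i, α (some i) = N := by
      rw [← Fintype.sum_option]; exact (mem_piAntidiag.1 hα).1
    funext o
    cases o
    · exact (Nat.eq_sub_of_add_eq hsum).symm
    · rfl
  refine sum_nbij' (fun α i ↦ α (some i)) (fun β o ↦ o.elim (N - ∑ i, β i) β) ?_ ?_ hcons
    (fun _ _ ↦ rfl) fun α hα ↦ by rw [hcons α hα]
  · intro α hα
    have hsum : α none + ∑ i, α (some i) = N := by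
      rw [← Fintype.sum_option]; exact (mem_piAntidiag.1 hα).1
    have hle : ∑ i, α (some i) ≤ N := (Nat.le_add_left _ _).trans_eq hsum
    exact mem_filter.2 ⟨mem_Iic.2 fun i ↦
      (single_le_sum_of_canonicallyOrdered (f := fun i ↦ α (some i)) (mem_univ i)).trans hle, hle⟩
  · intro β hβ
    simpa [Fintype.sum_option] using Nat.sub_add_cancel (mem_filter.1 hβ).2

theorem HasPosDefExpansion.exists_sum_Iic {ι κ A : Type*} [Fintype ι] [DecidableEq ι] [CommRing A]
    [Algebra ℝ A] {ℓ : ι → A} {N : ℕ} {F : Matrix κ κ A}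
    (h : HasPosDefExpansion (fun o : Option ι ↦ o.elim 1 ℓ) N F) :
    ∃ G : (ι → ℕ) → Matrix κ κ ℝ, (∀ α, ∑ i, α i ≤ N → (G α).PosDef) ∧
      F = ∑ α ∈ (Iic fun _ ↦ N).filter (fun α ↦ ∑ i, α i ≤ N),
        (∏ i, ℓ i ^ α i) • (G α).map (algebraMap ℝ A) := by
  obtain ⟨G, hG, hF⟩ := h
  refine ⟨fun α ↦ G fun o ↦ o.elim (N - ∑ i, α i) α, fun α hα ↦ hG _ ?_, ?_⟩
  · simpa [Fintype.sum_option] using Nat.sub_add_cancel hα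
  · rw [hF, sum_piAntidiag_option]
    simp only [Fintype.prod_option, Option.elim_none, Option.elim_some, one_pow, one_mul]

theorem handelman_matrix_polynomials_general {σ ι κ : Type*} [Finite σ] [Fintype ι]
    [DecidableEq ι] [Finite κ] (L : ι → MvPolynomial σ ℝ) (hL : ∀ i, (L i).totalDegree ≤ 1)
    (hne : {x | ∀ i, 0 ≤ eval x (L i)}.Nonempty)
    (hbdd : Bornology.IsBounded {x | ∀ i, 0 ≤ eval x (L i)})
    (F : Matrix κ κ (MvPolynomial σ ℝ)) (hF : F.IsSymm)
    (hpos : ∀ x, (∀ i, 0 ≤ eval x (L i)) → (F.map (eval x)).PosDef) :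
    ∀ᶠ N in atTop, ∃ G : (ι → ℕ) → Matrix κ κ ℝ,
      (∀ α, ∑ i, α i ≤ N → (G α).PosDef) ∧
      F = ∑ α ∈ (Iic fun _ ↦ N).filter (fun α ↦ ∑ i, α i ≤ N),
        (∏ i, L i ^ α i) • (G α).map C := by
  obtain ⟨c, hc, s, hs, hsum⟩ := exists_pos_sum_smul_eq_C_of_isBounded hL hne hbdd
  have hs' : 0 < 1 + s := by positivity
  have hgen : Algebra.adjoin ℝ (Set.range fun o : Option ι ↦ o.elim 1 L) = ⊤ :=
    top_unique <| (adjoin_range_eq_top_of_isBounded hL hne hbdd).ge.trans <|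
      Algebra.adjoin_mono <| Set.range_subset_iff.2 fun i ↦ ⟨some i, rfl⟩
  have hweights : ∑ o : Option ι, ((1 + s)⁻¹ * o.elim 1 c) • o.elim 1 L = 1 := by
    simp only [Fintype.sum_option, Option.elim_none, Option.elim_some, mul_smul, ← smul_sum, hsum,
      one_smul]
    rw [← C_1, ← C_add, smul_eq_C_mul, ← C_mul, inv_mul_cancel₀ hs'.ne']
  have hweights_pos : ∀ o : Option ι, 0 < (1 + s)⁻¹ * o.elim 1 c := by
    rintro (_ | i)
    · simpa using hs'
    · exact mul_pos (inv_pos.2 hs') (hc i)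
  refine (eventually_hasPosDefExpansion hweights_pos hweights hgen hF fun φ hφ ↦ ?_).mono
    fun N hN ↦ hN.exists_sum_Iic
  have hφ_eval : ∀ p, φ p = eval (fun j ↦ φ (X j)) p := fun p ↦ by
    conv_lhs => rw [aeval_unique φ, aeval_eq_eval]
    rfl
  have hmap : F.map φ = F.map (eval fun j ↦ φ (X j)) := Matrix.ext fun i j ↦ hφ_eval _
  exact hmap ▸ hpos _ fun i ↦ hφ_eval (L i) ▸ hφ (some i)

end Handelman

/-- Handelman's Positivstellensatz for matrix polynomials. If
`K = {x : L₁(x) ≥ 0, …, L_m(x) ≥ 0}` is a convex compact polyhedron with non-empty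
interior, defined by linear polynomials `Lᵢ`, and the symmetric matrix polynomial `F` of
degree `d > 0` is positive definite on `K`, then `F = Σ_{|α| ≤ N+d} G_α L₁^{α₁} ⋯ L_m^{α_m}`
with all `G_α` positive definite. -/
theorem handelman_matrix_polynomials (n t m d : ℕ) (hd : 0 < d)
    (Lp : Fin m → MvPolynomial (Fin n) ℝ) (hlin : ∀ i, (Lp i).totalDegree ≤ 1)
    (K : Set (Fin n → ℝ)) (hK : K = {x | ∀ i, 0 ≤ MvPolynomial.eval x (Lp i)})
    (hKconv : Convex ℝ K) (hKcomp : IsCompact K) (hKint : (interior K).Nonempty)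
    (F : Matrix (Fin t) (Fin t) (MvPolynomial (Fin n) ℝ)) (hsymm : F.IsSymm)
    (hdegle : ∀ i j, (F i j).totalDegree ≤ d) (hdeg : ∃ i j, (F i j).totalDegree = d)
    (hpos : ∀ x ∈ K, (F.map (MvPolynomial.eval x)).PosDef) :
    ∃ N : ℕ, 0 < N ∧ ∃ G : (Fin m → ℕ) → Matrix (Fin t) (Fin t) ℝ,
      (∀ α : Fin m → ℕ, (∑ i, α i) ≤ N + d → (G α).PosDef) ∧
      F = ∑ α ∈ (Finset.Iic (fun _ => N + d : Fin m → ℕ)).filter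
            (fun α => (∑ i, α i) ≤ N + d),
          (∏ i, (Lp i) ^ (α i)) • (G α).map MvPolynomial.C := by
  subst hK
  obtain ⟨N, hN⟩ := eventually_atTop.1 <| handelman_matrix_polynomials_general Lp hlin
    (hKint.mono interior_subset) hKcomp.isBounded F hsymm hpos
  exact ⟨N + 1, N.succ_pos, hN _ (by omega)⟩
end
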